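/- arXiv:2505.04951 — 5 statements merged into one kernel-verified Lean document; each statement's English description precedes it below -/
import Mathlib

section
/- For every integer n ≥ 4, the relative averaged prime gap satisfies ḡ_n / p̄_n < 2/n. -/
open Finset Real

/-- `nthPrime n` is the n-th prime number with 1-based indexing:
`nthPrime 1 = 2`, `nthPrime 2 = 3`, `nthPrime 3 = 5`, ... -/
noncomputable def nthPrime (n : ℕ) : ℕ := Nat.nth Nat.Prime (n - 1)

/-- The arithmetic average of the first `n` primes. -/
noncomputable def avgPrime (n : ℕ) : ℝ := (1 / (n : ℝ)) * ∑ i ∈ Finset.Icc 1 n, (nthPrime i : ℝ)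

/-- The gap in the averaged primes. -/
noncomputable def avgGap (n : ℕ) : ℝ := avgPrime (n + 1) - avgPrime n

/-- The averaged-prime counting function `π̄(x) = #{i ≥ 1 : p̄_i ≤ x}`. -/
noncomputable def avgPrimeCount (x : ℝ) : ℕ := Nat.card {i : ℕ | 1 ≤ i ∧ avgPrime i ≤ x}

/-- The ordinary prime counting function for a real argument. -/
noncomputable def primeCount (x : ℝ) : ℕ := Nat.card {q : ℕ | q.Prime ∧ (q : ℝ) ≤ x}

open scoped Nat Chebyshev ArithmeticFunction.vonMangoldt

/-!
Writing `S = ∑ i ≤ n, p_i`, the quotient `ḡ_n / p̄_n` equals `(n p_{n+1} - S) / ((n + 1) S)`, so it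
suffices that `n p_{n+1} ≤ 3 S`. This says that the primes below `N = p_{n+1}` have mean at least
`N / 3`, i.e. `∑ p < N, (N / 3 - p) ≤ 0`, which in fact holds for every `N`.

For `N ≥ 2 ^ 16`, multiply by `log N = log p + log (N / p)`. Partial summation and Chebyshev's
bounds `0.912 N ≤ θ N` and `ψ x ≤ 1.106 x + O(log² x)` give
`∑ p < N, (N / 3 - p) log p ≤ -0.052 N²`; the true asymptotic constant is `1 / 3 - 1 / 2`, so these
bounds, though not sharp, leave it negative. In `∑ p < N, (N / 3 - p) log (N / p)`, which is of the
lower order `N² / log N`, only the primes `p < N / 3` contribute positively, and it suffices to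
replace their density by the density `8 / 30` of the integers coprime to 30, which gives at most
`0.047 N²`. For `N ≤ 2 ^ 16` the inequality is verified by computation in the kernel.
-/

lemma mul_log_sub_log_le {a b : ℝ} (ha : 0 < a) (hb : 0 < b) :
    a * (log b - log a) ≤ b - a := by
  have h := log_le_sub_one_of_pos (div_pos hb ha)
  rw [log_div hb.ne' ha.ne'] at h
  calc a * (log b - log a) ≤ a * (b / a - 1) := by gcongr
    _ = b - a := by field_simp

lemma monotone_log_natCast : Monotone fun n : ℕ ↦ log n := by
  intro m n hmn
  rcases m.eq_zero_or_pos with rfl | hm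
  · simpa using log_natCast_nonneg n
  · exact log_le_log (by exact_mod_cast hm) (by exact_mod_cast hmn)

/-! ### Factorials -/

lemma log_factorial_le {m : ℕ} (hm : 1 ≤ m) : log (m ! : ℝ) ≤ (m + 1) * log m - m + 1 := by
  induction m, hm using Nat.le_induction with
  | base => simp
  | succ k hk ih =>
    have hk0 : (0 : ℝ) < k := by exact_mod_cast hk
    have tangent := mul_log_sub_log_le (by positivity : (0 : ℝ) < k + 1) hk0
    rw [Nat.factorial_succ]
    push_cast
    rw [log_mul (by positivity) (by positivity)]
    linarith

lemma le_log_factorial {m : ℕ} (hm : 1 ≤ m) : m * log m - m + 1 ≤ log (m ! : ℝ) := by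
  induction m, hm using Nat.le_induction with
  | base => simp
  | succ k hk ih =>
    have hk0 : (0 : ℝ) < k := by exact_mod_cast hk
    have tangent := mul_log_sub_log_le hk0 (by positivity : (0 : ℝ) < k + 1)
    rw [Nat.factorial_succ]
    push_cast
    rw [log_mul (by positivity) (by positivity)]
    linarith

lemma abs_log_factorial_floor_sub_le {x : ℝ} (hx : 1 ≤ x) :
    |log (⌊x⌋₊ ! : ℝ) - (x * log x - x + 1)| ≤ log x := by
  have floor_pos : 1 ≤ ⌊x⌋₊ := Nat.floor_pos.2 hx
  have upper := log_factorial_le floor_pos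
  have lower := le_log_factorial floor_pos
  have floor_le : (⌊x⌋₊ : ℝ) ≤ x := Nat.floor_le (by linarith)
  have lt_floor := Nat.lt_floor_add_one x
  have one_le : (1 : ℝ) ≤ ⌊x⌋₊ := by exact_mod_cast floor_pos
  generalize (⌊x⌋₊ : ℝ) = m at *
  have log_mono : log m ≤ log x := log_le_log (by linarith) floor_le
  have tangent_at_m := mul_log_sub_log_le (by linarith : 0 < m) (by linarith : 0 < x)
  have tangent_at_x := mul_log_sub_log_le (by linarith : 0 < x) (by linarith : 0 < m)
  rw [abs_le]
  constructor <;> nlinarith [log_nonneg one_le]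

lemma log_factorial_eq_sum_vonMangoldt (N : ℕ) :
    log (N ! : ℝ) = ∑ d ∈ Ioc 0 N, Λ d * ((N / d : ℕ) : ℝ) := by
  rw [← ArithmeticFunction.sum_Ioc_mul_zeta_eq_sum, ArithmeticFunction.vonMangoldt_mul_zeta]
  induction N with
  | zero => simp
  | succ k ih =>
    rw [sum_Ioc_succ_top (by lia), ← ih, Nat.factorial_succ, Nat.cast_mul,
      log_mul (by positivity) (by positivity), ArithmeticFunction.log_apply, add_comm]

lemma log_factorial_div_eq_sum_vonMangoldt (N k : ℕ) :
    log ((N / k)! : ℝ) = ∑ d ∈ Ioc 0 N, Λ d * ((N / d / k : ℕ) : ℝ) := by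
  rw [log_factorial_eq_sum_vonMangoldt,
    ← sum_subset (Ioc_subset_Ioc_right (Nat.div_le_self N k))]
  · exact sum_congr rfl fun d _ ↦ by rw [Nat.div_right_comm]
  · intro d hd hd'
    have : N / k < d := by simp_all
    rw [Nat.div_right_comm, Nat.div_eq_of_lt this, Nat.cast_zero, mul_zero]

/-! ### Chebyshev's bounds -/

/-- Chebyshev's combination `log (N! ⌊N/30⌋! / (⌊N/2⌋! ⌊N/3⌋! ⌊N/5⌋!))` of logarithms of
factorials, which approximates `ψ N` closely enough to bound it from both sides. -/
noncomputable def logFactorialRatio (N : ℕ) : ℝ :=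
  log (N ! : ℝ) - log ((N / 2)! : ℝ) - log ((N / 3)! : ℝ) - log ((N / 5)! : ℝ) + log ((N / 30)! : ℝ)

lemma logFactorialRatio_eq_sum_vonMangoldt (N : ℕ) :
    logFactorialRatio N = ∑ d ∈ Ioc 0 N, Λ d *
      (((N / d : ℕ) : ℝ) - (N / d / 2 : ℕ) - (N / d / 3 : ℕ) - (N / d / 5 : ℕ)
        + (N / d / 30 : ℕ)) := by
  simp only [logFactorialRatio, log_factorial_div_eq_sum_vonMangoldt,
    log_factorial_eq_sum_vonMangoldt N, mul_sub, mul_add, sum_sub_distrib, sum_add_distrib]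

lemma psi_natCast (N : ℕ) : ψ (N : ℝ) = ∑ d ∈ Ioc 0 N, Λ d := by
  rw [Chebyshev.psi, Nat.floor_natCast]

lemma logFactorialRatio_le_psi (N : ℕ) : logFactorialRatio N ≤ ψ N := by
  rw [logFactorialRatio_eq_sum_vonMangoldt, psi_natCast]
  refine sum_le_sum fun d _ ↦ mul_le_of_le_one_right ArithmeticFunction.vonMangoldt_nonneg ?_
  have h : N / d + N / d / 30 ≤ 1 + N / d / 2 + N / d / 3 + N / d / 5 := by lia
  have : ((N / d : ℕ) : ℝ) + (N / d / 30 : ℕ)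
      ≤ 1 + (N / d / 2 : ℕ) + (N / d / 3 : ℕ) + (N / d / 5 : ℕ) := by exact_mod_cast h
  linarith

lemma psi_le_psi_div_six_add (N : ℕ) : ψ N ≤ ψ (N / 6 : ℕ) + logFactorialRatio N := by
  have psi_eq : ψ (N / 6 : ℕ) = ∑ d ∈ Ioc 0 N, Λ d * (if d ≤ N / 6 then 1 else 0) := by
    simp only [psi_natCast, mul_ite, mul_one, mul_zero, ← sum_filter]
    congr 1
    grind
  rw [logFactorialRatio_eq_sum_vonMangoldt, psi_eq, psi_natCast, ← sum_add_distrib]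
  refine sum_le_sum fun d hd ↦ ?_
  obtain ⟨d_pos, d_le⟩ := mem_Ioc.1 hd
  rw [← mul_add]
  refine le_mul_of_one_le_right ArithmeticFunction.vonMangoldt_nonneg ?_
  have quot_pos : 1 ≤ N / d := (Nat.one_le_div_iff d_pos).2 d_le
  have quot_lt : N / 6 < d → N / d < 6 := fun h ↦ by rw [Nat.div_lt_iff_lt_mul d_pos]; lia
  have h : 1 + N / d / 2 + N / d / 3 + N / d / 5
      ≤ (if d ≤ N / 6 then 1 else 0) + N / d + N / d / 30 := by
    split_ifs <;> lia
  have : 1 + ((N / d / 2 : ℕ) : ℝ) + (N / d / 3 : ℕ) + (N / d / 5 : ℕ)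
      ≤ (if d ≤ N / 6 then 1 else 0) + (N / d : ℕ) + (N / d / 30 : ℕ) := by exact_mod_cast h
  linarith

lemma abs_log_factorial_div_sub_le {N k : ℕ} (hk : 1 ≤ k) (hN : k ≤ N) :
    |log ((N / k)! : ℝ) - (N / k * (log N - log k) - N / k + 1)| ≤ log N - log k := by
  have k_pos : (0 : ℝ) < k := by exact_mod_cast hk
  have le_N : (k : ℝ) ≤ N := by exact_mod_cast hN
  rw [← log_div (by linarith) (by linarith), ← Nat.floor_div_eq_div (K := ℝ)]
  exact abs_log_factorial_floor_sub_le ((one_le_div k_pos).2 le_N)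

lemma logFactorialRatio_bounds {N : ℕ} (hN : 30 ≤ N) :
    logFactorialRatio N ∈
      Set.Icc (0.9212 * N - 5 * log N + 5.8) (0.9213 * N + 5 * log N - 7.8) := by
  have h1 := abs_le.1 (abs_log_factorial_div_sub_le le_rfl (by lia : 1 ≤ N))
  have h2 := abs_le.1 (abs_log_factorial_div_sub_le (by simp) (by lia : 2 ≤ N))
  have h3 := abs_le.1 (abs_log_factorial_div_sub_le (by simp) (by lia : 3 ≤ N))
  have h5 := abs_le.1 (abs_log_factorial_div_sub_le (by simp) (by lia : 5 ≤ N))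
  have h30 := abs_le.1 (abs_log_factorial_div_sub_le (by simp) hN)
  have log_thirty : log 30 = log 2 + log 3 + log 5 := by
    rw [← log_mul (by simp) (by simp), ← log_mul (by simp) (by simp)]
    norm_num
  simp only [Nat.div_one, Nat.cast_one, log_one, Nat.cast_ofNat, log_thirty] at h1 h2 h3 h5 h30
  have log_two := And.intro log_two_gt_d9 log_two_lt_d9
  have log_three := And.intro log_three_gt_d9 log_three_lt_d9
  have log_five := And.intro log_five_gt_d9 log_five_lt_d9
  have lower : 0.9212 * N ≤ (14 / 30 * log 2 + 9 / 30 * log 3 + 5 / 30 * log 5) * N := by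
    gcongr; linarith
  have upper : (14 / 30 * log 2 + 9 / 30 * log 3 + 5 / 30 * log 5) * N ≤ 0.9213 * N := by
    gcongr; linarith
  rw [logFactorialRatio]
  constructor <;> linarith

lemma sq_primeCounting_le {n : ℕ} (hn : n < 30) : n.primeCounting ^ 2 ≤ 6 * n := by
  decide +revert

-- The constant `1.106` exceeds the sum `6 / 5 * 0.9213` of the linear terms met when `n` is divided
-- repeatedly by 6; the sum of the logarithmic ones is absorbed by `log n ^ 2`.
lemma psi_natCast_le (n : ℕ) : ψ n ≤ 1.106 * n + 1.4 * log n ^ 2 := by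
  induction n using Nat.strong_induction_on with
  | _ n ih =>
  rcases lt_or_ge n 30 with hn | hn
  · have count : ((n.primeCounting : ℝ)) ^ 2 ≤ 6 * n := by exact_mod_cast sq_primeCounting_le hn
    have := Chebyshev.psi_le_primeCounting_mul_log n
    -- AM-GM: `π(n) log n ≤ π(n)² / 5.6 + 1.4 log² n`
    nlinarith [sq_nonneg ((n.primeCounting : ℝ) - 2.8 * log n)]
  · have log_six : log 6 = log 2 + log 3 := by rw [← log_mul] <;> norm_num
    have log_two := And.intro log_two_gt_d9 log_two_lt_d9
    have log_three := And.intro log_three_gt_d9 log_three_lt_d9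
    have div_le : ((n / 6 : ℕ) : ℝ) ≤ n / 6 := Nat.cast_div_le
    have div_pos : (1 : ℝ) ≤ (n / 6 : ℕ) := by exact_mod_cast (by lia : 1 ≤ n / 6)
    have log_le : log (n / 6 : ℕ) ≤ log n - log 6 := by
      rw [← log_div (by positivity) (by simp)]
      exact log_le_log (by linarith) div_le
    have := psi_le_psi_div_six_add n
    have := (logFactorialRatio_bounds hn).2
    have := ih (n / 6) (by lia)
    have log_sq_le : log (n / 6 : ℕ) ^ 2 ≤ (log n - log 6) ^ 2 :=
      pow_le_pow_left₀ (log_nonneg div_pos) log_le 2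
    have log_nonneg : 0 ≤ log n := log_natCast_nonneg n
    nlinarith

lemma psi_le {x : ℝ} (hx : 1 ≤ x) : ψ x ≤ 1.106 * x + 1.4 * log x ^ 2 := by
  have floor_pos : (1 : ℝ) ≤ ⌊x⌋₊ := by exact_mod_cast Nat.floor_pos.2 hx
  have floor_le : (⌊x⌋₊ : ℝ) ≤ x := Nat.floor_le (by linarith)
  rw [Chebyshev.psi_eq_psi_coe_floor]
  calc ψ ⌊x⌋₊ ≤ 1.106 * ⌊x⌋₊ + 1.4 * log ⌊x⌋₊ ^ 2 := psi_natCast_le _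
    _ ≤ 1.106 * x + 1.4 * log x ^ 2 := by
      have := log_nonneg floor_pos
      gcongr

lemma log_le_mul_sqrt {x : ℝ} (hx : 2 ^ 16 ≤ x) : log x ≤ 0.0434 * √x := by
  have sqrt_ge : 2 ^ 8 ≤ √x := le_sqrt_of_sq_le (by linarith)
  have tangent := mul_log_sub_log_le (by norm_num : (0 : ℝ) < 2 ^ 8) (by linarith : 0 < √x)
  rw [log_sqrt (by linarith), log_pow] at tangent
  norm_num at tangent sqrt_ge
  linarith [log_two_lt_d9]

lemma log_sq_le {x : ℝ} (hx : 2 ^ 16 ≤ x) : log x ^ 2 ≤ 0.0019 * x := by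
  calc log x ^ 2 ≤ (0.0434 * √x) ^ 2 :=
        pow_le_pow_left₀ (log_nonneg (by linarith)) (log_le_mul_sqrt hx) 2
    _ = 0.0434 ^ 2 * x := by rw [mul_pow, sq_sqrt (by linarith)]
    _ ≤ 0.0019 * x := by gcongr; norm_num

lemma sqrt_le_div {x : ℝ} (hx : 2 ^ 16 ≤ x) : √x ≤ x / 256 :=
  (sqrt_le_left (by positivity)).2 (by nlinarith)

lemma log_le_mul {x : ℝ} (hx : 2 ^ 16 ≤ x) : log x ≤ 0.00017 * x := by
  linarith [log_le_mul_sqrt hx, sqrt_le_div hx]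

lemma psi_sqrt_le {x : ℝ} (hx : 2 ^ 16 ≤ x) : ψ (x ^ (2 : ℝ)⁻¹) ≤ 0.005 * x := by
  have one_le : 1 ≤ x ^ (2 : ℝ)⁻¹ := one_le_rpow (by linarith) (by norm_num)
  have root_le : x ^ (2 : ℝ)⁻¹ ≤ x / 256 := by
    rw [← one_div, ← sqrt_eq_rpow]
    exact sqrt_le_div hx
  have := psi_le one_le
  rw [log_rpow (by linarith)] at this
  linarith [log_sq_le hx]

lemma psi_cbrt_le {x : ℝ} (hx : 2 ^ 16 ≤ x) : ψ (x ^ (3 : ℝ)⁻¹) ≤ 0.0015 * x := by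
  have one_le : 1 ≤ x ^ (3 : ℝ)⁻¹ := one_le_rpow (by linarith) (by norm_num)
  have root_le : x ^ (3 : ℝ)⁻¹ ≤ x / 1000 := by
    rw [rpow_inv_le_iff_of_pos (by linarith) (by positivity) (by norm_num)]
    norm_cast
    nlinarith [mul_le_mul hx hx (by norm_num) (by linarith)]
  have := psi_le one_le
  rw [log_rpow (by linarith)] at this
  linarith [log_sq_le hx]

lemma le_theta {N : ℕ} (hN : 2 ^ 16 ≤ N) : 0.912 * N ≤ θ N := by
  have hx : (2 ^ 16 : ℝ) ≤ N := by exact_mod_cast hN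
  have fifth_root : ψ ((N : ℝ) ^ (5 : ℝ)⁻¹) ≤ ψ ((N : ℝ) ^ (3 : ℝ)⁻¹) :=
    Chebyshev.psi_mono (rpow_le_rpow_of_exponent_le (by linarith) (by norm_num))
  linarith [Chebyshev.psi_sub_theta_le_psi_add_psi_add_psi (N : ℝ), logFactorialRatio_le_psi N,
    (logFactorialRatio_bounds (by lia : 30 ≤ N)).1, psi_sqrt_le hx, psi_cbrt_le hx,
    log_le_mul hx]

/-! ### Sums over primes -/

lemma sum_primesBelow_mul_sum_Ico {R : Type*} [NonUnitalNonAssocSemiring R] (f g : ℕ → R) (N : ℕ) :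
    ∑ p ∈ N.primesBelow, f p * ∑ m ∈ Ico p N, g m =
      ∑ m ∈ range N, (∑ p ∈ m.primesLE, f p) * g m := by
  simp only [mul_sum, sum_mul]
  refine sum_comm' fun p m ↦ ?_
  simp only [Nat.mem_primesBelow, Nat.mem_primesLE, mem_Ico, mem_range]
  grind

lemma sum_primesBelow_mul_sub {N : ℕ} (f : ℕ → ℝ) :
    ∑ p ∈ N.primesBelow, f p * (N - p) = ∑ m ∈ range N, ∑ p ∈ m.primesLE, f p := by
  have h := sum_primesBelow_mul_sum_Ico f (fun _ ↦ 1) N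
  simp only [mul_one] at h
  rw [← h]
  refine sum_congr rfl fun p hp ↦ ?_
  rw [sum_const, Nat.card_Ico, nsmul_one, Nat.cast_sub (Nat.lt_of_mem_primesBelow hp).le]

lemma sum_range_natCast_le (N : ℕ) : ∑ m ∈ range N, (m : ℝ) ≤ (N : ℝ) ^ 2 / 2 := by
  induction N with
  | zero => simp
  | succ k ih => rw [sum_range_succ]; push_cast; linarith

lemma sum_primesBelow_log_mul_sub_le (N : ℕ) :
    ∑ p ∈ N.primesBelow, log p * (N - p) ≤ 0.553 * N ^ 2 + 1.4 * log N ^ 2 * N := by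
  have theta_le : ∀ m ∈ range N, ∑ p ∈ m.primesLE, log p ≤ 1.106 * m + 1.4 * log N ^ 2 := by
    intro m hm
    rw [← Chebyshev.theta_eq_sum_primesLE_log]
    refine (Chebyshev.theta_le_psi _).trans ((psi_natCast_le m).trans ?_)
    gcongr 1.106 * m + 1.4 * ?_ ^ 2
    exact monotone_log_natCast (mem_range.1 hm).le
  calc ∑ p ∈ N.primesBelow, log p * (N - p)
      = ∑ m ∈ range N, ∑ p ∈ m.primesLE, log p := sum_primesBelow_mul_sub fun p ↦ log p
    _ ≤ ∑ m ∈ range N, (1.106 * (m : ℝ) + 1.4 * log N ^ 2) := sum_le_sum theta_le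
    _ = 1.106 * ∑ m ∈ range N, (m : ℝ) + 1.4 * log N ^ 2 * N := by
      rw [sum_add_distrib, ← mul_sum, sum_const, card_range, nsmul_eq_mul, mul_comm (N : ℝ)]
    _ ≤ 0.553 * N ^ 2 + 1.4 * log N ^ 2 * N := by linarith [sum_range_natCast_le N]

lemma theta_sub_log_le (N : ℕ) : θ N - log N ≤ ∑ p ∈ N.primesBelow, log p := by
  rw [Chebyshev.theta_eq_sum_primesLE_log, Nat.primesLE, Nat.primesBelow_succ]
  split_ifs
  · rw [sum_insert (by simp [Nat.mem_primesBelow]), add_sub_cancel_left]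
  · linarith [log_natCast_nonneg N]

lemma sum_third_sub_mul_log_le {N : ℕ} (hN : 2 ^ 16 ≤ N) :
    ∑ p ∈ N.primesBelow, (N / 3 - p : ℝ) * log p ≤ -0.052 * N ^ 2 := by
  have hx : (2 ^ 16 : ℝ) ≤ N := by exact_mod_cast hN
  have first_moment := sum_primesBelow_log_mul_sub_le N
  have log_sum_ge : 0.9118 * N ≤ ∑ p ∈ N.primesBelow, log p := by
    linarith [theta_sub_log_le N, le_theta hN, log_le_mul hx]
  have log_sq := log_sq_le hx
  calc ∑ p ∈ N.primesBelow, (N / 3 - p : ℝ) * log p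
      = ∑ p ∈ N.primesBelow, log p * (N - p) - 2 / 3 * N * ∑ p ∈ N.primesBelow, log p := by
        rw [mul_sum, ← sum_sub_distrib]
        exact sum_congr rfl fun p _ ↦ by ring
    _ ≤ -0.052 * N ^ 2 := by nlinarith

lemma primeCounting_le (m : ℕ) : (m.primeCounting : ℝ) ≤ 4 / 15 * m + 10 := by
  have count_thirty : Nat.primeCounting 30 = 10 := by decide
  rcases le_total m 30 with hm | hm
  · have : (m.primeCounting : ℝ) ≤ 10 := by
      exact_mod_cast (Nat.monotone_primeCounting hm).trans_eq count_thirty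
    linarith [m.cast_nonneg (α := ℝ)]
  · obtain ⟨n, rfl⟩ := Nat.exists_eq_add_of_le hm
    have sieve := Nat.primeCounting_add_le (by simp : 30 ≠ 0) le_rfl n
    rw [count_thirty, show Nat.totient 30 = 8 by decide] at sieve
    have : 15 * (30 + n).primeCounting ≤ 4 * (30 + n) + 150 := by lia
    have : (15 * (30 + n).primeCounting : ℝ) ≤ 4 * (30 + n : ℕ) + 150 := by exact_mod_cast this
    linarith

lemma sum_primesBelow_sub_le (M : ℕ) :
    ∑ p ∈ M.primesBelow, (M - p : ℝ) ≤ 2 / 15 * M ^ 2 + 10 * M := by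
  have h := sum_primesBelow_mul_sub (N := M) fun _ ↦ 1
  simp only [one_mul, sum_const, nsmul_one, Nat.primesLE_card_eq_primeCounting] at h
  calc ∑ p ∈ M.primesBelow, (M - p : ℝ) = ∑ m ∈ range M, (m.primeCounting : ℝ) := h
    _ ≤ ∑ m ∈ range M, (4 / 15 * m + 10 : ℝ) := sum_le_sum fun m _ ↦ primeCounting_le m
    _ = 4 / 15 * ∑ m ∈ range M, (m : ℝ) + 10 * M := by
      rw [sum_add_distrib, ← mul_sum, sum_const, card_range, nsmul_eq_mul, mul_comm (M : ℝ)]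
    _ ≤ 2 / 15 * M ^ 2 + 10 * M := by linarith [sum_range_natCast_le M]

lemma log_sub_log_le_sum_Ico {a b : ℕ} (ha : 0 < a) (hab : a ≤ b) :
    log b - log a ≤ ∑ m ∈ Ico a b, (m : ℝ)⁻¹ := by
  induction b, hab using Nat.le_induction with
  | base => simp
  | succ k hk ih =>
    have k_pos : (0 : ℝ) < k := by exact_mod_cast ha.trans_le hk
    have tangent := mul_log_sub_log_le k_pos (by positivity : (0 : ℝ) < k + 1)
    rw [add_sub_cancel_left, ← le_inv_mul_iff₀ k_pos, mul_one] at tangent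
    rw [sum_Ico_succ_top hk]
    push_cast
    linarith

lemma sum_range_inv_le (M : ℕ) : ∑ m ∈ range M, (m : ℝ)⁻¹ ≤ 1 + log M := by
  cases M with
  | zero => simp
  | succ k =>
    have harmonic_le := harmonic_le_one_add_log k
    rw [harmonic] at harmonic_le
    push_cast at harmonic_le
    rw [sum_range_succ', Nat.cast_zero, inv_zero, add_zero]
    have log_mono : log k ≤ log (k + 1 : ℕ) := monotone_log_natCast k.le_succ
    push_cast at log_mono ⊢
    linarith

lemma sum_primesBelow_log_sub_log_le (M : ℕ) :
    ∑ p ∈ M.primesBelow, (log M - log p) ≤ 4 / 15 * M + 10 * (1 + log M) := by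
  have swap := sum_primesBelow_mul_sum_Ico (fun _ ↦ (1 : ℝ)) (fun m ↦ (m : ℝ)⁻¹) M
  simp only [one_mul, sum_const, nsmul_one, Nat.primesLE_card_eq_primeCounting] at swap
  calc ∑ p ∈ M.primesBelow, (log M - log p)
      ≤ ∑ p ∈ M.primesBelow, ∑ m ∈ Ico p M, (m : ℝ)⁻¹ := by
        refine sum_le_sum fun p hp ↦ ?_
        exact log_sub_log_le_sum_Ico (Nat.prime_of_mem_primesBelow hp).pos
          (Nat.lt_of_mem_primesBelow hp).le
    _ = ∑ m ∈ range M, (m.primeCounting : ℝ) * (m : ℝ)⁻¹ := swap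
    _ ≤ ∑ m ∈ range M, (4 / 15 + 10 * (m : ℝ)⁻¹) := by
        refine sum_le_sum fun m _ ↦ ?_
        rcases m.eq_zero_or_pos with rfl | hm
        · norm_num
        · calc (m.primeCounting : ℝ) * (m : ℝ)⁻¹ ≤ (4 / 15 * m + 10) * (m : ℝ)⁻¹ := by
                gcongr; exact primeCounting_le m
            _ = 4 / 15 + 10 * (m : ℝ)⁻¹ := by field_simp [hm.ne']
    _ = 4 / 15 * M + 10 * ∑ m ∈ range M, (m : ℝ)⁻¹ := by
        rw [sum_add_distrib, ← mul_sum, sum_const, card_range, nsmul_eq_mul, mul_comm (M : ℝ)]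
    _ ≤ 4 / 15 * M + 10 * (1 + log M) := by gcongr; exact sum_range_inv_le M

lemma sum_third_sub_mul_log_sub_log_le_of_le {N M : ℕ} (hNM : N ≤ 3 * M) (hMN : M ≤ N) :
    ∑ p ∈ N.primesBelow, (N / 3 - p : ℝ) * (log N - log p) ≤
      log 3 * ∑ p ∈ M.primesBelow, (M - p : ℝ) + M * ∑ p ∈ M.primesBelow, (log M - log p) := by
  have hNM' : (N : ℝ) ≤ 3 * M := by exact_mod_cast hNM
  have subset : M.primesBelow ⊆ N.primesBelow := fun p hp ↦
    Nat.mem_primesBelow.2 ((Nat.mem_primesBelow.1 hp).imp_left hMN.trans_lt')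
  have large_primes : ∀ p ∈ N.primesBelow, p ∉ M.primesBelow →
      (N / 3 - p : ℝ) * (log N - log p) ≤ 0 := by
    intro p hp hp'
    have M_le : M ≤ p := by simp_all [Nat.mem_primesBelow]
    have M_le' : (M : ℝ) ≤ p := by exact_mod_cast M_le
    exact mul_nonpos_of_nonpos_of_nonneg (by linarith)
      (sub_nonneg.2 (monotone_log_natCast (Nat.lt_of_mem_primesBelow hp).le))
  refine (sum_le_sum_of_subset_of_nonpos' subset large_primes).trans ?_
  rw [mul_sum, mul_sum, ← sum_add_distrib]
  refine sum_le_sum fun p hp ↦ ?_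
  have p_lt : p < M := Nat.lt_of_mem_primesBelow hp
  have p_lt' : (p : ℝ) < M := by exact_mod_cast p_lt
  have log_p_le : log p ≤ log M := monotone_log_natCast p_lt.le
  have log_p_le' : log p ≤ log N := monotone_log_natCast (p_lt.le.trans hMN)
  have log_N_le : log N ≤ log 3 + log M := by
    rw [← log_mul (by simp) (by exact_mod_cast p_lt.ne_bot)]
    exact log_le_log (by exact_mod_cast (p_lt.trans_le hMN).pos) hNM'
  calc (N / 3 - p : ℝ) * (log N - log p)
      ≤ (M - p) * (log 3 + log M - log p) := by
        gcongr; linarith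
    _ ≤ log 3 * (M - p) + M * (log M - log p) := by
        linarith [mul_nonneg p.cast_nonneg (sub_nonneg.2 log_p_le)]

lemma sum_third_sub_mul_log_sub_log_le {N : ℕ} (hN : 2 ^ 16 ≤ N) :
    ∑ p ∈ N.primesBelow, (N / 3 - p : ℝ) * (log N - log p) ≤ 0.047 * N ^ 2 := by
  have hx : (2 ^ 16 : ℝ) ≤ N := by exact_mod_cast hN
  obtain ⟨M, hNM, hMN⟩ : ∃ M, N ≤ 3 * M ∧ 3 * M ≤ N + 2 := ⟨(N + 2) / 3, by lia, by lia⟩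
  have M_le : (3 * M : ℝ) ≤ 1.0001 * N := by
    have : (3 * M : ℝ) ≤ N + 2 := by exact_mod_cast hMN
    linarith
  have log_M_le : log M ≤ 0.00017 * N :=
    (monotone_log_natCast (by lia : M ≤ N)).trans (log_le_mul hx)
  have log_three := log_three_lt_d9
  calc ∑ p ∈ N.primesBelow, (N / 3 - p : ℝ) * (log N - log p)
      ≤ log 3 * ∑ p ∈ M.primesBelow, (M - p : ℝ)
          + M * ∑ p ∈ M.primesBelow, (log M - log p) :=
        sum_third_sub_mul_log_sub_log_le_of_le hNM (by lia)
    _ ≤ log 3 * (2 / 15 * M ^ 2 + 10 * M) + M * (4 / 15 * M + 10 * (1 + log M)) := by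
        gcongr
        · exact sum_primesBelow_sub_le M
        · exact sum_primesBelow_log_sub_log_le M
    _ ≤ 1.0987 * (2 / 15 * M ^ 2 + 10 * M) + M * (4 / 15 * M + 10 * (1 + 0.00017 * N)) := by
        gcongr
        linarith
    _ ≤ 0.047 * N ^ 2 := by
        have : (M : ℝ) ^ 2 ≤ (1.0001 * N / 3) ^ 2 := by gcongr; linarith
        nlinarith [M.cast_nonneg (α := ℝ)]

theorem mul_primeCounting'_le_three_mul_sum_of_ge {N : ℕ} (hN : 2 ^ 16 ≤ N) :
    N * N.primeCounting' ≤ 3 * ∑ p ∈ N.primesBelow, p := by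
  have log_N_pos : 0 < log N := log_pos (by exact_mod_cast (by lia : 1 < N))
  have weighted : (∑ p ∈ N.primesBelow, (N / 3 - p : ℝ)) * log N ≤ 0 := by
    calc (∑ p ∈ N.primesBelow, (N / 3 - p : ℝ)) * log N
        = ∑ p ∈ N.primesBelow, (N / 3 - p : ℝ) * log p
          + ∑ p ∈ N.primesBelow, (N / 3 - p : ℝ) * (log N - log p) := by
          rw [sum_mul, ← sum_add_distrib]
          exact sum_congr rfl fun p _ ↦ by ring
      _ ≤ -0.052 * N ^ 2 + 0.047 * N ^ 2 :=
          add_le_add (sum_third_sub_mul_log_le hN) (sum_third_sub_mul_log_sub_log_le hN)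
      _ ≤ 0 := by linarith [sq_nonneg (N : ℝ)]
  have := nonpos_of_mul_nonpos_left weighted log_N_pos
  rw [sum_sub_distrib, sum_const, nsmul_eq_mul, Nat.primesBelow_card_eq_primeCounting'] at this
  rw [← Nat.cast_le (α := ℝ)]
  push_cast
  linarith

/-! ### Small arguments, by computation -/

/-- `f n`, arranged so that the kernel reduces `n` to a numeral before it substitutes it into `f`;
otherwise the accumulators of a recursion grow into deeply nested unevaluated sums. -/
def withNumeral {α : Type*} (n : ℕ) (f : ℕ → α) : α := Nat.casesOn n (f 0) fun k ↦ f (k + 1)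

lemma withNumeral_eq {α : Type*} (n : ℕ) (f : ℕ → α) : withNumeral n f = f n := by
  cases n <;> rfl

/-- `m` together with the number and the sum of the primes below `m`. -/
def primeTally (m : ℕ) : ℕ × ℕ × ℕ := (m, m.primeCounting', ∑ p ∈ m.primesBelow, p)

/-- Computes `primeTally (m + 1)` from `primeTally m`, failing if the primes below `m` have mean
less than `m / 3`. The number `m` counts as prime if it is coprime to `Q`. -/
def tallyStep (Q : ℕ) : ℕ × ℕ × ℕ → Option (ℕ × ℕ × ℕ)
  | (m, c, s) =>
    bif (m * c).ble (3 * s) then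
      withNumeral (m + 1) fun m' ↦
        bif (m.gcd Q).beq 1 then
          withNumeral (c + 1) fun c' ↦ withNumeral (s + m) fun s' ↦ some (m', c', s')
        else some (m', c, s)
    else none

/-- `2 ^ d` iterations of `tallyStep`. Doubling keeps the recursion depth logarithmic in the number
of iterations. -/
def tallySweep (Q : ℕ) : ℕ → ℕ × ℕ × ℕ → Option (ℕ × ℕ × ℕ)
  | 0, t => tallyStep Q t
  | d + 1, t => (tallySweep Q d t).bind (tallySweep Q d)

lemma prime_iff_coprime_factorial {r m : ℕ} (hr : r < m) (hm : m < (r + 1) ^ 2) :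
    m.Prime ↔ m.Coprime r ! := by
  refine ⟨fun hp ↦ hp.coprime_factorial_of_lt hr, fun coprime ↦ ?_⟩
  have r_lt : r < m.minFac := (Nat.coprime_factorial_iff (by rintro rfl; simp_all)).1 coprime
  by_contra not_prime
  have : (r + 1) ^ 2 ≤ m.minFac ^ 2 := Nat.pow_le_pow_left r_lt 2
  have := Nat.minFac_sq_le_self (by lia) not_prime
  lia

lemma primeTally_succ (m : ℕ) :
    primeTally (m + 1) = if m.Prime then (m + 1, m.primeCounting' + 1, ∑ p ∈ m.primesBelow, p + m)
      else (m + 1, m.primeCounting', ∑ p ∈ m.primesBelow, p) := by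
  rw [primeTally, ← Nat.primesBelow_card_eq_primeCounting', Nat.primesBelow_succ]
  split_ifs
  · rw [card_insert_of_notMem (by simp [Nat.mem_primesBelow]),
      sum_insert (by simp [Nat.mem_primesBelow]), Nat.primesBelow_card_eq_primeCounting',
      add_comm (∑ p ∈ _, _)]
  · rw [Nat.primesBelow_card_eq_primeCounting']

lemma tallyStep_primeTally {r m : ℕ} {t : ℕ × ℕ × ℕ} (hr : r < m) (hm : m < (r + 1) ^ 2)
    (ht : tallyStep r ! (primeTally m) = some t) :
    m * m.primeCounting' ≤ 3 * ∑ p ∈ m.primesBelow, p ∧ t = primeTally (m + 1) := by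
  have prime_iff : (m.gcd r !).beq 1 = decide m.Prime := by
    rw [Bool.eq_iff_iff, Nat.beq_eq, decide_eq_true_iff]
    exact (prime_iff_coprime_factorial hr hm).symm
  rw [primeTally_succ]
  simp only [tallyStep, primeTally, withNumeral_eq, prime_iff] at ht
  cases check : (m * m.primeCounting').ble (3 * ∑ p ∈ m.primesBelow, p) with
  | false => simp [check] at ht
  | true =>
    refine ⟨Nat.le_of_ble_eq_true check, ?_⟩
    by_cases hp : m.Prime <;> simp_all

lemma tallySweep_primeTally {r d m : ℕ} {t : ℕ × ℕ × ℕ} (hr : r < m) (hm : m + 2 ^ d ≤ (r + 1) ^ 2)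
    (ht : tallySweep r ! d (primeTally m) = some t) :
    (∀ N ∈ Ico m (m + 2 ^ d), N * N.primeCounting' ≤ 3 * ∑ p ∈ N.primesBelow, p) ∧
      t = primeTally (m + 2 ^ d) := by
  induction d generalizing m t with
  | zero =>
    obtain ⟨le_at_m, rfl⟩ := tallyStep_primeTally hr (by lia) ht
    simpa using le_at_m
  | succ d ih =>
    obtain ⟨t', ht', ht⟩ := Option.bind_eq_some_iff.1 ht
    rw [pow_succ, mul_two, ← add_assoc] at *
    obtain ⟨first_half, rfl⟩ := ih hr (by lia) ht'
    obtain ⟨second_half, rfl⟩ := ih (by lia) hm ht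
    refine ⟨fun N hN ↦ ?_, rfl⟩
    rcases lt_or_ge N (m + 2 ^ d) with h | h
    · exact first_half N (by grind)
    · exact second_half N (by grind)

lemma tallySweep_primeTally_seventeen :
    tallySweep 16 ! 8 (primeTally 17) = some (273, 58, 7141) := by
  decide +kernel

lemma primeTally_273 : primeTally 273 = (273, 58, 7141) :=
  (tallySweep_primeTally (by simp) (by simp) tallySweep_primeTally_seventeen).2.symm

lemma isSome_tallySweep_primeTally_273 : (tallySweep 256 ! 16 (primeTally 273)).isSome := by
  have sweep : (withNumeral 256 ! fun Q ↦ tallySweep Q 16 (273, 58, 7141)).isSome := by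
    decide +kernel
  rwa [primeTally_273, ← withNumeral_eq 256 ! fun Q ↦ tallySweep Q 16 (273, 58, 7141)]

lemma mul_primeCounting'_le_three_mul_sum_of_le {N : ℕ} (hN : N ≤ 2 ^ 16) :
    N * N.primeCounting' ≤ 3 * ∑ p ∈ N.primesBelow, p := by
  rcases lt_or_ge N 17 with hN17 | hN17
  · clear hN
    decide +kernel +revert
  rcases lt_or_ge N 273 with hN273 | hN273
  · exact (tallySweep_primeTally (by simp) (by simp) tallySweep_primeTally_seventeen).1 N
      (mem_Ico.2 ⟨hN17, by lia⟩)
  · obtain ⟨t, ht⟩ := Option.isSome_iff_exists.1 isSome_tallySweep_primeTally_273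
    exact (tallySweep_primeTally (by simp) (by simp) ht).1 N (mem_Ico.2 ⟨hN273, by lia⟩)

theorem mul_primeCounting'_le_three_mul_sum_primesBelow (N : ℕ) :
    N * N.primeCounting' ≤ 3 * ∑ p ∈ N.primesBelow, p := by
  rcases le_total N (2 ^ 16) with hN | hN
  · exact mul_primeCounting'_le_three_mul_sum_of_le hN
  · exact mul_primeCounting'_le_three_mul_sum_of_ge hN

/-! ### Averaged primes -/

lemma sum_range_nth_prime (n : ℕ) :
    ∑ i ∈ range n, Nat.nth Nat.Prime i = ∑ p ∈ (Nat.nth Nat.Prime n).primesBelow, p := by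
  induction n with
  | zero => rw [Nat.nth_prime_zero_eq_two]; decide
  | succ k ih =>
    rw [sum_range_succ, ih, Nat.primesBelow, Nat.primesBelow,
      Nat.filter_range_nth_eq_insert_of_infinite Nat.infinite_setOfPred_prime,
      sum_insert (by simp), add_comm]

lemma avgPrime_eq_sum_range (n : ℕ) :
    avgPrime n = ((∑ i ∈ range n, Nat.nth Nat.Prime i : ℕ) : ℝ) / n := by
  rw [avgPrime, one_div_mul_eq_div, ← Ico_add_one_right_eq_Icc, sum_Ico_eq_sum_range]
  simp [nthPrime, add_comm 1]

lemma mul_nth_prime_le_three_mul_sum (n : ℕ) :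
    n * Nat.nth Nat.Prime n ≤ 3 * ∑ i ∈ range n, Nat.nth Nat.Prime i := by
  have h := mul_primeCounting'_le_three_mul_sum_primesBelow (Nat.nth Nat.Prime n)
  rwa [Nat.primeCounting'_nth_eq, mul_comm, ← sum_range_nth_prime] at h

theorem stmt7_general (n : ℕ) (hn : 0 < n) : avgGap n / avgPrime n < 2 / (n : ℝ) := by
  have key : (n * Nat.nth Nat.Prime n : ℝ) ≤ 3 * (∑ i ∈ range n, Nat.nth Nat.Prime i : ℕ) := by
    exact_mod_cast mul_nth_prime_le_three_mul_sum n
  have n_pos : (0 : ℝ) < n := by exact_mod_cast hn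
  have prime_pos : (0 : ℝ) < Nat.nth Nat.Prime n := by
    exact_mod_cast (Nat.prime_nth_prime n).pos
  rw [avgGap, avgPrime_eq_sum_range, avgPrime_eq_sum_range, sum_range_succ, Nat.cast_add]
  generalize ((∑ i ∈ range n, Nat.nth Nat.Prime i : ℕ) : ℝ) = S at key ⊢
  generalize (Nat.nth Nat.Prime n : ℝ) = q at *
  have S_pos : 0 < S := by linarith [mul_pos n_pos prime_pos]
  have gap_eq : ((S + q) / (n + 1 : ℕ) - S / n) / (S / n) = (n * q - S) / ((n + 1) * S) := by
    push_cast
    field_simp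
    ring
  rw [gap_eq, div_lt_div_iff₀ (by positivity) n_pos]
  calc (n * q - S) * n ≤ (3 * S - S) * n := by gcongr
    _ < 2 * ((n + 1) * S) := by linarith

theorem stmt7 (n : ℕ) (hn : 4 ≤ n) :
    avgGap n / avgPrime n < 2 / (n : ℝ) :=
  stmt7_general n (by lia)
end

section
/- For every integer n ≥ 2, the averaged primes satisfy the strengthened Andrica-type bound √(p̄_{n+1}) − √(p̄_n) < √(ln n / n). -/
open Finset Real

/-!
Write `p k` for the `k`-th prime counted from `0` and `S n` for the sum of the first `n` primes.
Squaring away the roots, the theorem follows from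
`n * p n - S n < 2 * (n + 1) * √(S n * log n)`.

For `n ≥ 1024` this follows from `S n ≥ 0.33 n² log n` and `p n ≤ 1.475 n log n`. The first comes
from `θ x ≤ x log 4` and `p k ≥ e (k + 1)`; the second needs Chebyshev's estimate `ψ x ≳ 0.92 x`,
obtained from the factorial ratio `n! (n/30)! / ((n/2)! (n/3)! (n/5)!)`, since the cruder
`ψ x ≳ x log 2` suffices only for astronomically large `n`.

For `n < 1024`, both sides of the inequality are nondecreasing in `n`, and asymptotically the right
side is larger by a factor `2√2`. It therefore suffices to compare the sides at the two ends of
each interval of a subdivision of `[2, 1024]` with ratio about `4/3`, which takes the values of only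
two dozen primes.
-/

open Nat (nth)
open ArithmeticFunction (vonMangoldt)

/-! ### Logarithms and factorials -/

lemma mul_log_add_one_sub_log_le_one {x : ℝ} (hx : 0 < x) : x * (log (x + 1) - log x) ≤ 1 := by
  rw [← log_div (by positivity) hx.ne']
  calc x * log ((x + 1) / x) ≤ x * ((x + 1) / x - 1) := by
        gcongr
        exact log_le_sub_one_of_pos (by positivity)
    _ = 1 := by field_simp; ring

lemma one_le_add_one_mul_log_add_one_sub_log {x : ℝ} (hx : 0 < x) :
    1 ≤ (x + 1) * (log (x + 1) - log x) := by
  rw [← log_div (by positivity) hx.ne']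
  calc 1 = (x + 1) * (1 - ((x + 1) / x)⁻¹) := by field_simp; ring
    _ ≤ (x + 1) * log ((x + 1) / x) := by
        gcongr
        exact one_sub_inv_le_log_of_pos (by positivity)

lemma log_factorial_succ (n : ℕ) :
    log ((n + 1).factorial) = log (n + 1 : ℝ) + log n.factorial := by
  rw [Nat.factorial_succ, Nat.cast_mul, log_mul (by positivity) (by positivity), Nat.cast_succ]

lemma log_factorial_eq_sum_range_log (n : ℕ) :
    log n.factorial = ∑ i ∈ range n, log (i + 1 : ℝ) := by
  induction n with
  | zero => simp
  | succ n ih => rw [log_factorial_succ, ih, sum_range_succ, add_comm]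

lemma mul_log_sub_self_le_log_factorial (n : ℕ) : n * log n - n ≤ log n.factorial := by
  rcases eq_or_ne n 0 with rfl | hn
  · simp
  have hlog_n : 0 ≤ log n := log_natCast_nonneg n
  have hlog_two_pi : 0 ≤ log (2 * π) := log_nonneg (by linarith [pi_gt_three])
  linarith [Stirling.le_log_factorial_stirling hn]

lemma log_factorial_le_s9 {n : ℕ} (hn : 1 ≤ n) :
    log n.factorial ≤ n * log n - n + log n + 1 := by
  induction n, hn using Nat.le_induction with
  | base => simp
  | succ n hn ih =>
    have hstep := one_le_add_one_mul_log_add_one_sub_log (x := n) (by exact_mod_cast hn)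
    rw [log_factorial_succ]
    push_cast
    linarith

lemma sum_range_mul_log_ge (n : ℕ) :
    (n : ℝ) ^ 2 / 2 * log n - (n : ℝ) ^ 2 / 4 ≤ ∑ k ∈ range n, (k + 1 : ℝ) * log (k + 1) := by
  induction n with
  | zero => simp
  | succ n ih =>
    rcases Nat.eq_zero_or_pos n with rfl | hn
    · norm_num
    have hn' : (0 : ℝ) < n := by exact_mod_cast hn
    have hstep := mul_le_mul_of_nonneg_left (mul_log_add_one_sub_log_le_one hn') hn'.le
    have hlog : 0 ≤ log (n + 1 : ℝ) := log_nonneg (by linarith)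
    rw [sum_range_succ]
    push_cast
    linarith

lemma log_factorial_eq_sum_vonMangoldt_mul_div {n N : ℕ} (hnN : n ≤ N) :
    log n.factorial = ∑ d ∈ Ioc 0 N, vonMangoldt d * (n / d : ℕ) := by
  calc log n.factorial = ∑ k ∈ Ioc 0 n, log (k : ℝ) := by
        rw [log_factorial_eq_sum_range_log, range_eq_Ico, ← Ico_add_one_add_one_eq_Ioc,
          sum_Ico_add' (fun k : ℕ ↦ log (k : ℝ)) 0 n 1 |>.symm]
        simp
    _ = ∑ d ∈ Ioc 0 n, vonMangoldt d * (n / d : ℕ) := by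
        rw [← ArithmeticFunction.sum_Ioc_mul_zeta_eq_sum, ArithmeticFunction.vonMangoldt_mul_zeta]
        rfl
    _ = ∑ d ∈ Ioc 0 N, vonMangoldt d * (n / d : ℕ) := by
        refine sum_subset (Ioc_subset_Ioc_right hnN) fun d hdN hdn ↦ ?_
        have hlt : n < d := by simp only [mem_Ioc] at hdN hdn; omega
        simp [Nat.div_eq_of_lt hlt]

/-! ### Chebyshev's lower bound for `ψ` -/

lemma log_factorial_ratio_le_psi (n : ℕ) :
    log n.factorial + log (n / 30).factorial - log (n / 2).factorial - log (n / 3).factorial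
      - log (n / 5).factorial ≤ Chebyshev.psi n := by
  have hterm (d : ℕ) : ((n / d : ℕ) : ℝ) + (n / 30 / d : ℕ)
      ≤ 1 + (n / 2 / d : ℕ) + (n / 3 / d : ℕ) + (n / 5 / d : ℕ) := by
    simp only [Nat.div_right_comm n _ d]
    exact_mod_cast (by omega : n / d + n / d / 30 ≤ 1 + n / d / 2 + n / d / 3 + n / d / 5)
  rw [log_factorial_eq_sum_vonMangoldt_mul_div le_rfl,
    log_factorial_eq_sum_vonMangoldt_mul_div (Nat.div_le_self n 30),
    log_factorial_eq_sum_vonMangoldt_mul_div (Nat.div_le_self n 2),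
    log_factorial_eq_sum_vonMangoldt_mul_div (Nat.div_le_self n 3),
    log_factorial_eq_sum_vonMangoldt_mul_div (Nat.div_le_self n 5),
    Chebyshev.psi, Nat.floor_natCast,
    ← sum_add_distrib, ← sum_sub_distrib, ← sum_sub_distrib, ← sum_sub_distrib]
  refine sum_le_sum fun d _ ↦ ?_
  have := mul_le_mul_of_nonneg_left (hterm d) (ArithmeticFunction.vonMangoldt_nonneg (n := d))
  linarith

-- The constant is `30 * (log 2 / 2 + log 3 / 3 + log 5 / 5 - log 30 / 30) = 27.638…`.
lemma psi_thirty_mul_ge {m : ℕ} (hm : 1 ≤ m) :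
    27.6 * m - 3 * log (30 * m) ≤ Chebyshev.psi (30 * m : ℕ) := by
  have hm' : (0 : ℝ) < m := by exact_mod_cast hm
  have hratio := log_factorial_ratio_le_psi (30 * m)
  rw [show 30 * m / 30 = m by omega, show 30 * m / 2 = 15 * m by omega,
    show 30 * m / 3 = 10 * m by omega, show 30 * m / 5 = 6 * m by omega] at hratio
  have h30 := mul_log_sub_self_le_log_factorial (30 * m)
  have h1 := mul_log_sub_self_le_log_factorial m
  have h15 := log_factorial_le_s9 (n := 15 * m) (by omega)
  have h10 := log_factorial_le_s9 (n := 10 * m) (by omega)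
  have h6 := log_factorial_le_s9 (n := 6 * m) (by omega)
  have hlog_mul {c : ℝ} (hc : 0 < c) : log (c * m) = log c + log m := log_mul hc.ne' hm'.ne'
  have hlog30 : log 30 = log 2 + log 3 + log 5 := by norm_num [← log_mul]
  have hlog15 : log 15 = log 3 + log 5 := by norm_num [← log_mul]
  have hlog10 : log 10 = log 2 + log 5 := by norm_num [← log_mul]
  have hlog6 : log 6 = log 2 + log 3 := by norm_num [← log_mul]
  push_cast at h30 h15 h10 h6
  rw [hlog_mul (by norm_num), hlog30] at h30 ⊢
  rw [hlog_mul (by norm_num), hlog15] at h15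
  rw [hlog_mul (by norm_num), hlog10] at h10
  rw [hlog_mul (by norm_num), hlog6] at h6
  have hlog2_mul := mul_le_mul_of_nonneg_left log_two_gt_d9.le hm'.le
  have hlog3_mul := mul_le_mul_of_nonneg_left log_three_gt_d9.le hm'.le
  have hlog5_mul := mul_le_mul_of_nonneg_left log_five_gt_d9.le hm'.le
  linarith [log_two_gt_d9, log_three_gt_d9, log_five_gt_d9]

lemma mul_sub_le_primeCounting_add_mul_log {n : ℕ} (hn : 30 ≤ n) :
    0.92 * (n : ℝ) - 27 ≤ (n.primeCounting + 3) * log n := by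
  have hpsi_le := Chebyshev.psi_le_primeCounting_mul_log n
  have hpsi_mono : Chebyshev.psi (30 * (n / 30) : ℕ) ≤ Chebyshev.psi n :=
    Chebyshev.psi_mono (by exact_mod_cast (by omega))
  have hpsi_ge := psi_thirty_mul_ge (m := n / 30) (by omega)
  have hle : (30 : ℝ) * (n / 30 : ℕ) ≤ n := by exact_mod_cast (by omega)
  have hge : (n : ℝ) ≤ 30 * (n / 30 : ℕ) + 29 := by exact_mod_cast (by omega)
  have hlog : log (30 * (n / 30 : ℕ)) ≤ log n :=
    log_le_log (by exact_mod_cast (by omega : 0 < 30 * (n / 30))) hle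
  linarith

/-! ### Bounds for the `n`-th prime -/

lemma primeCounting_nth_prime (n : ℕ) : (nth Nat.Prime n).primeCounting = n + 1 :=
  Nat.count_nth_succ_of_infinite Nat.infinite_setOfPred_prime n

lemma mul_nth_prime_sub_le {n : ℕ} (hn : 28 ≤ n) :
    0.92 * (nth Nat.Prime n : ℝ) - 27 ≤ (n + 4) * log (nth Nat.Prime n) := by
  have h := mul_sub_le_primeCounting_add_mul_log (n := nth Nat.Prime n)
    (by linarith [Nat.add_two_le_nth_prime n])
  rw [primeCounting_nth_prime] at h
  push_cast at h
  linarith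

-- The tangent line to `log` at `y` has slope `1 / y ≤ a / b`.
lemma le_of_mul_sub_le_mul_log {a b c x y : ℝ} (hx : 0 < x) (hy : 0 < y) (hb : 0 ≤ b)
    (hslope : b ≤ a * y) (hyc : b * log y < a * y - c) (hxc : a * x - c ≤ b * log x) : x ≤ y := by
  by_contra! hlt
  have htangent : log x ≤ log y + (x / y - 1) := by
    have := log_le_sub_one_of_pos (div_pos hx hy)
    rw [log_div hx.ne' hy.ne'] at this
    linarith
  have hquot : 0 ≤ x / y - 1 := by
    rw [sub_nonneg, one_le_div hy]
    exact hlt.le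
  have : b * log x < a * x - c := calc
    b * log x ≤ b * log y + b * (x / y - 1) := by
      rw [← mul_add]
      exact mul_le_mul_of_nonneg_left htangent hb
    _ < a * y - c + a * y * (x / y - 1) :=
      add_lt_add_of_lt_of_le hyc (mul_le_mul_of_nonneg_right hslope hquot)
    _ = a * x - c := by field_simp; ring
  linarith

lemma log_ge_of_le {x : ℝ} (hx : 1024 ≤ x) : 6.93 ≤ log x := by
  calc (6.93 : ℝ) ≤ 10 * log 2 := by linarith [log_two_gt_d9]
    _ = log 1024 := by rw [show (1024 : ℝ) = 2 ^ 10 by norm_num, log_pow]; norm_num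
    _ ≤ log x := log_le_log (by norm_num) hx

lemma log_mul_mul_log_le {x : ℝ} (hx : 1024 ≤ x) :
    log (1.475 * x * log x) ≤ 1.4765 + 1.125 * log x := by
  have hlog_pos : 0 < log x := by linarith [log_ge_of_le hx]
  have hlog_const : log 1.475 ≤ 0.397 := by
    have h : log ((1.475 : ℝ) ^ 7) ≤ log ((2 : ℝ) ^ 4) := log_le_log (by norm_num) (by norm_num)
    rw [log_pow, log_pow] at h
    push_cast at h
    linarith [log_two_lt_d9]
  have hlog_log : log (log x) ≤ 1.0795 + 0.125 * log x := by
    have h := log_le_sub_one_of_pos (show 0 < log x / 8 by positivity)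
    rw [log_div hlog_pos.ne' (by norm_num), show (8 : ℝ) = 2 ^ 3 by norm_num, log_pow] at h
    push_cast at h
    linarith [log_two_lt_d9]
  rw [log_mul (by positivity) hlog_pos.ne', log_mul (by norm_num) (by positivity)]
  linarith

lemma nth_prime_le_mul_log {n : ℕ} (hn : 1024 ≤ n) :
    (nth Nat.Prime n : ℝ) ≤ 1.475 * n * log n := by
  have hn' : (1024 : ℝ) ≤ n := by exact_mod_cast hn
  have hlog := log_ge_of_le hn'
  have hmul_log : n * 6.93 ≤ n * log n := by gcongr
  refine le_of_mul_sub_le_mul_log (by exact_mod_cast (Nat.prime_nth_prime n).pos) (by positivity)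
    (by positivity) (by linarith) ?_ (mul_nth_prime_sub_le (by omega))
  have hlog_le := mul_le_mul_of_nonneg_left (log_mul_mul_log_le hn')
    (by positivity : (0 : ℝ) ≤ n + 4)
  have hexcess : 1024 * (0.232 * log n - 1.4765) ≤ n * (0.232 * log n - 1.4765) := by
    gcongr
    linarith
  linarith

-- Among the residues modulo `30` only `8` are coprime to `30`, and `30 / 8 > e`.
lemma exp_one_mul_le_nth_prime {k : ℕ} (hk : 39 ≤ k) :
    exp 1 * (k + 1) ≤ nth Nat.Prime k := by
  have hp := Nat.add_two_le_nth_prime k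
  have hcount := Nat.primeCounting'_add_le (a := 30) (k := 31) (by norm_num) (by norm_num)
    (nth Nat.Prime k - 31)
  rw [Nat.add_sub_cancel' (by omega), Nat.primeCounting'_nth_eq,
    show Nat.primeCounting' 31 = 10 by decide +kernel,
    show Nat.totient 30 = 8 by decide +kernel] at hcount
  have hlinear : (15 : ℝ) * k ≤ 4 * nth Nat.Prime k + 146 := by exact_mod_cast (by omega)
  have hk' : (39 : ℝ) ≤ k := by exact_mod_cast hk
  have := mul_le_mul_of_nonneg_right exp_one_lt_d9.le (by linarith : (0 : ℝ) ≤ k + 1)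
  linarith

lemma log_add_one_le_log_nth_prime (k : ℕ) :
    log (k + 1 : ℝ) + 1 - (if k < 39 then 1 else 0) ≤ log (nth Nat.Prime k) := by
  split_ifs with hk
  · have hp := Nat.add_two_le_nth_prime k
    have := log_le_log (by positivity : (0 : ℝ) < k + 1)
      (by exact_mod_cast (by omega) : (k + 1 : ℝ) ≤ nth Nat.Prime k)
    linarith
  · have := log_le_log (by positivity) (exp_one_mul_le_nth_prime (not_lt.mp hk))
    rw [log_mul (by positivity) (by positivity), log_exp] at this
    linarith

lemma mul_log_sub_le_sum_log_nth_prime (n : ℕ) :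
    n * log n - 39 ≤ ∑ i ∈ range n, log (nth Nat.Prime i) := by
  have hcard : #{i ∈ range n | i < 39} ≤ 39 := by
    calc #{i ∈ range n | i < 39} ≤ #(range 39) := card_le_card fun i ↦ by simp
      _ = 39 := card_range 39
  have hcard' : (#{i ∈ range n | i < 39} : ℝ) ≤ 39 := by exact_mod_cast hcard
  have hsum := sum_le_sum fun i (_ : i ∈ range n) ↦ log_add_one_le_log_nth_prime i
  rw [sum_sub_distrib, sum_add_distrib, ← log_factorial_eq_sum_range_log, sum_boole, sum_const,
    card_range, nsmul_one] at hsum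
  linarith [mul_log_sub_self_le_log_factorial n]

lemma sum_log_nth_prime_le_theta (n : ℕ) :
    ∑ i ∈ range (n + 1), log (nth Nat.Prime i) ≤ Chebyshev.theta (nth Nat.Prime n) := by
  have hinj : Set.InjOn (nth Nat.Prime) (range (n + 1)) :=
    (Nat.nth_injective Nat.infinite_setOfPred_prime).injOn
  rw [Chebyshev.theta, Nat.floor_natCast, ← sum_image (f := fun p : ℕ ↦ log p) hinj]
  refine sum_le_sum_of_subset_of_nonneg ?_ fun p _ _ ↦ log_natCast_nonneg p
  simp only [image_subset_iff, mem_range, mem_filter, mem_Ioc]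
  exact fun i hi ↦ ⟨⟨(Nat.prime_nth_prime i).pos,
    Nat.nth_monotone Nat.infinite_setOfPred_prime (by omega)⟩, Nat.prime_nth_prime i⟩

lemma mul_log_sub_le_log_four_mul_nth_prime (k : ℕ) :
    (k + 1 : ℝ) * log (k + 1) - 39 ≤ log 4 * nth Nat.Prime k := by
  have h := (mul_log_sub_le_sum_log_nth_prime (k + 1)).trans (sum_log_nth_prime_le_theta k)
  push_cast at h
  exact h.trans (Chebyshev.theta_le_log4_mul_x (by positivity))

/-! ### Sums of primes -/

/-- The sum of the first `n` primes. -/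
noncomputable def primeSum (n : ℕ) : ℕ := ∑ i ∈ range n, nth Nat.Prime i

lemma avgPrime_eq_primeSum_div (n : ℕ) : avgPrime n = primeSum n / n := by
  have hsum : ∑ i ∈ Icc 1 n, (nthPrime i : ℝ) = primeSum n := by
    rw [primeSum, Nat.cast_sum, range_eq_Ico, ← Ico_add_one_right_eq_Icc,
      ← sum_Ico_add' (fun i ↦ (nthPrime i : ℝ)) 0 n 1]
    simp [nthPrime]
  rw [avgPrime, hsum, one_div_mul_eq_div]

lemma primeSum_succ (n : ℕ) : primeSum (n + 1) = primeSum n + nth Nat.Prime n :=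
  sum_range_succ _ n

lemma primeSum_mono : Monotone primeSum :=
  monotone_nat_of_le_succ fun n ↦ by simp [primeSum_succ]

lemma primeSum_add_mul_nth_prime_le {a b : ℕ} (hab : a ≤ b) :
    primeSum a + (b - a) * nth Nat.Prime a ≤ primeSum b := by
  rw [primeSum, primeSum, ← sum_range_add_sum_Ico _ hab, ← Nat.card_Ico a b, ← smul_eq_mul]
  gcongr
  exact card_nsmul_le_sum _ _ _ fun i hi ↦
    Nat.nth_monotone Nat.infinite_setOfPred_prime (mem_Ico.mp hi).1

lemma mul_sq_mul_log_le_primeSum {n : ℕ} (hn : 1024 ≤ n) :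
    0.33 * (n : ℝ) ^ 2 * log n ≤ primeSum n := by
  have hn' : (1024 : ℝ) ≤ n := by exact_mod_cast hn
  have hlog4 : log 4 = 2 * log 2 := by
    rw [show (4 : ℝ) = 2 ^ 2 by norm_num, log_pow]
    norm_num
  have hsum : (n : ℝ) ^ 2 / 2 * log n - (n : ℝ) ^ 2 / 4 - 39 * n ≤ log 4 * primeSum n := by
    have h := sum_le_sum fun k (_ : k ∈ range n) ↦ mul_log_sub_le_log_four_mul_nth_prime k
    rw [sum_sub_distrib, ← mul_sum, sum_const, card_range, nsmul_eq_mul, ← Nat.cast_sum] at h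
    rw [primeSum]
    linarith [sum_range_mul_log_ge n]
  have hsq_mul_log : (n : ℝ) ^ 2 * 6.93 ≤ (n : ℝ) ^ 2 * log n := by
    gcongr
    exact log_ge_of_le hn'
  have hlinear : 39 * (n : ℝ) ≤ 0.0381 * (n : ℝ) ^ 2 := by nlinarith
  refine le_of_mul_le_mul_left ?_ (by linarith [log_two_gt_d9] : 0 < log 4)
  calc log 4 * (0.33 * (n : ℝ) ^ 2 * log n) ≤ 1.3863 * (0.33 * (n : ℝ) ^ 2 * log n) := by
        gcongr
        linarith [log_two_lt_d9]
    _ ≤ (n : ℝ) ^ 2 / 2 * log n - (n : ℝ) ^ 2 / 4 - 39 * n := by nlinarith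
    _ ≤ log 4 * primeSum n := hsum

/-! ### The inequality without roots of averages -/

lemma sqrt_div_sub_sqrt_div_lt {x S P L : ℝ} (hx : 0 < x) (hS : 0 ≤ S) (hL : 0 < L)
    (h : x * P - S < 2 * (x + 1) * √(S * L)) :
    √((S + P) / (x + 1)) - √(S / x) < √(L / x) := by
  rw [sub_lt_iff_lt_add, sqrt_lt' (by positivity), add_sq, sq_sqrt (by positivity),
    sq_sqrt (by positivity), mul_assoc, ← sqrt_mul (by positivity)]
  have hcross : √(L / x * (S / x)) = √(S * L) / x := by
    rw [show L / x * (S / x) = S * L / x ^ 2 by field_simp, sqrt_div' _ (by positivity),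
      sqrt_sq hx.le]
  have hdiff : (S + P) / (x + 1) - S / x < 2 * (√(S * L) / x) := by
    rw [show (S + P) / (x + 1) - S / x = (x * P - S) / (x * (x + 1)) by field_simp; ring,
      div_lt_iff₀ (by positivity)]
    calc x * P - S < 2 * (x + 1) * √(S * L) := h
      _ = 2 * (√(S * L) / x) * (x * (x + 1)) := by field_simp
  rw [hcross]
  linarith [div_pos hL hx]

/-- The inequality `n p - S < 2 (n + 1) √(S log n)`, where `S` is the sum of the first `n` primes
and `p` is the next prime; it implies the bound on `√(avgPrime (n + 1)) - √(avgPrime n)`. -/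
def PrimeSumBound (n : ℕ) : Prop :=
  n * nth Nat.Prime n - primeSum n < 2 * (n + 1) * √(primeSum n * log n)

lemma PrimeSumBound.sqrt_avgPrime_sub_lt {n : ℕ} (hn : 2 ≤ n) (h : PrimeSumBound n) :
    √(avgPrime (n + 1)) - √(avgPrime n) < √(log n / n) := by
  rw [avgPrime_eq_primeSum_div, avgPrime_eq_primeSum_div, primeSum_succ]
  push_cast
  exact sqrt_div_sub_sqrt_div_lt (by positivity) (by positivity)
    (log_pos (by exact_mod_cast hn)) h

lemma primeSumBound_of_large {n : ℕ} (hn : 1024 ≤ n) : PrimeSumBound n := by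
  have hlog_pos : 0 < log n := log_pos (by exact_mod_cast (by omega : 1 < n))
  have hS := mul_sq_mul_log_le_primeSum hn
  have hsqrt : 0.574 * (n * log n) < √(primeSum n * log n) := by
    refine lt_sqrt_of_sq_lt ?_
    calc (0.574 * (n * log n)) ^ 2 < 0.33 * (n : ℝ) ^ 2 * log n * log n := by
          have : 0 < (n * log n) ^ 2 := by positivity
          linarith
      _ ≤ primeSum n * log n := by gcongr
  calc (n : ℝ) * nth Nat.Prime n - primeSum n
      ≤ n * (1.475 * n * log n) - 0.33 * (n : ℝ) ^ 2 * log n := by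
        gcongr
        exact nth_prime_le_mul_log hn
    _ ≤ 2 * n * (0.574 * (n * log n)) := by
        have : 0 ≤ (n : ℝ) ^ 2 * log n := by positivity
        linarith
    _ ≤ 2 * (n + 1) * (0.574 * (n * log n)) := by gcongr; linarith
    _ < 2 * (n + 1) * √(primeSum n * log n) := by gcongr

/-! ### Verification for small `n` -/

lemma mul_sub_sum_range_le {f : ℕ → ℝ} {m n : ℕ} {x y : ℝ} (hmn : m ≤ n) (hxy : x ≤ y)
    (hf : ∀ i < n, f i ≤ y) : m * x - ∑ i ∈ range m, f i ≤ n * y - ∑ i ∈ range n, f i := by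
  have hsum (k : ℕ) (z : ℝ) : k * z - ∑ i ∈ range k, f i = ∑ i ∈ range k, (z - f i) := by
    simp [sum_sub_distrib]
  rw [hsum, hsum]
  calc ∑ i ∈ range m, (x - f i) ≤ ∑ i ∈ range m, (y - f i) := by gcongr
    _ ≤ ∑ i ∈ range n, (y - f i) :=
      sum_le_sum_of_subset_of_nonneg (range_mono hmn) fun i hi _ ↦
        sub_nonneg.mpr (hf i (mem_range.mp hi))

lemma mul_nth_prime_sub_primeSum_le {n b : ℕ} (hnb : n < b) :
    (n : ℝ) * nth Nat.Prime n - primeSum n ≤ b * (nth Nat.Prime b - 1 : ℕ) - primeSum b := by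
  have hlt {i : ℕ} (hi : i < b) : nth Nat.Prime i ≤ nth Nat.Prime b - 1 :=
    Nat.le_sub_one_of_lt (Nat.nth_strictMono Nat.infinite_setOfPred_prime hi)
  simp only [primeSum, Nat.cast_sum]
  exact mul_sub_sum_range_le hnb.le (by exact_mod_cast hlt hnb)
    fun i hi ↦ by exact_mod_cast hlt hi

lemma log_two_mul_natLog_pow_le (n k : ℕ) : log 2 * Nat.log 2 (n ^ k) ≤ k * log n := by
  rw [← log_pow, ← le_div_iff₀' (log_pos one_lt_two)]
  exact_mod_cast natLog_le_logb (n ^ k) 2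

-- `Nat.log 2 (a ^ 4) * 693 / 4000` is a lower bound for `log a`, from `0.693 < log 2`.
lemma primeSumBound_of_mem_block {a b n s t : ℕ} (han : a ≤ n) (hnb : n < b)
    (hs : s ≤ primeSum a) (ht : t ≤ primeSum b)
    (h : 1000 * (b * (nth Nat.Prime b - 1) - t) ^ 2 < 693 * Nat.log 2 (a ^ 4) * (a + 1) ^ 2 * s) :
    PrimeSumBound n := by
  set D : ℕ := b * (nth Nat.Prime b - 1) - t
  have ha : 0 < a := Nat.pos_of_ne_zero fun ha ↦ by simp [ha] at h
  have hlog : 0.693 * (Nat.log 2 (a ^ 4) : ℝ) ≤ 4 * log a := by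
    refine le_trans ?_ (log_two_mul_natLog_pow_le a 4)
    gcongr
    linarith [log_two_gt_d9]
  have hD : (D : ℝ) < 2 * (a + 1) * √(s * log a) := by
    refine lt_of_pow_lt_pow_left₀ 2 (by positivity) ?_
    rw [mul_pow, sq_sqrt (by positivity)]
    have hcheck : (1000 : ℝ) * D ^ 2 < 693 * Nat.log 2 (a ^ 4) * (a + 1) ^ 2 * s := by
      exact_mod_cast h
    have := mul_le_mul_of_nonneg_left hlog (by positivity : (0 : ℝ) ≤ (a + 1) ^ 2 * s)
    linarith
  calc (n : ℝ) * nth Nat.Prime n - primeSum n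
      ≤ b * (nth Nat.Prime b - 1 : ℕ) - primeSum b := mul_nth_prime_sub_primeSum_le hnb
    _ ≤ b * (nth Nat.Prime b - 1 : ℕ) - t := by gcongr
    _ ≤ D := by
        rw [sub_le_iff_le_add]
        exact_mod_cast le_tsub_add
    _ < 2 * (a + 1) * √(s * log a) := hD
    _ ≤ 2 * (n + 1) * √(primeSum n * log n) := by
        gcongr
        exact hs.trans (primeSum_mono han)

lemma prime_iff_coprime_primorial {m k : ℕ} (hmk : m < k) (hkm : k < (m + 1) ^ 2) :
    k.Prime ↔ k.Coprime (primorial m) := by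
  refine ⟨fun hk ↦ ?_, fun hcop ↦ ?_⟩
  · rw [hk.coprime_iff_not_dvd, hk.dvd_primorial_iff]
    exact hmk.not_ge
  · by_contra hk
    have hk_one : k ≠ 1 := by rintro rfl; simp [Nat.lt_one_iff.mp hmk] at hkm
    have hprime := Nat.minFac_prime hk_one
    have hle : k.minFac ≤ m := by
      have := (Nat.minFac_sq_le_self (by omega) hk).trans_lt hkm
      exact Nat.lt_succ_iff.mp (lt_of_pow_lt_pow_left₀ 2 (by positivity) this)
    exact Nat.not_coprime_of_dvd_of_dvd hprime.one_lt k.minFac_dvd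
      (hprime.dvd_primorial_iff.mpr hle) hcop

lemma nth_prime_eq_of_count_coprime {m a b q r : ℕ} (hq : nth Nat.Prime a = q) (hmq : m < q)
    (hrm : r < (m + 1) ^ 2) (hqr : q ≤ r) (hr : r.Coprime (primorial m))
    (hcount : a + Nat.count (fun k ↦ (q + k).Coprime (primorial m)) (r - q) = b) :
    nth Nat.Prime b = r := by
  have hcount_q : Nat.count Nat.Prime q = a := by
    rw [← hq, Nat.count_nth_of_infinite Nat.infinite_setOfPred_prime]
  have hcount_r : Nat.count Nat.Prime r = b := by
    rw [← Nat.add_sub_cancel' hqr, Nat.count_add, hcount_q, ← hcount, Nat.count, Nat.count]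
    congr 1
    refine List.countP_congr fun k hk ↦ ?_
    have hk : k < r - q := List.mem_range.mp hk
    simpa using prime_iff_coprime_primorial (by omega) (by omega)
  rw [← hcount_r]
  exact Nat.nth_count ((prime_iff_coprime_primorial (by omega) hrm).mpr hr)

/-- The state of the verification of `PrimeSumBound` at the index `a`: the value `q` of the prime
with (zero-based) index `a`, a lower bound `s` for the sum of the first `a` primes, and the
inequality for all smaller indices from `2` on. -/
structure Checkpoint (a q s : ℕ) : Prop where
  nth_prime_eq : nth Nat.Prime a = q
  le_primeSum : s ≤ primeSum a
  primeSumBound : ∀ n, 2 ≤ n → n < a → PrimeSumBound n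

lemma checkpoint_two : Checkpoint 2 5 5 where
  nth_prime_eq := Nat.nth_prime_two_eq_five
  le_primeSum := by simp [primeSum, sum_range_succ]
  primeSumBound n hn hlt := by omega

lemma Checkpoint.next {a q s m M : ℕ} (h : Checkpoint a q s) (hM : primorial m = M) (b r : ℕ)
    (hcheck : m < q ∧ r < (m + 1) ^ 2 ∧ q ≤ r ∧ r.Coprime M ∧
      a + Nat.count (fun k ↦ (q + k).Coprime M) (r - q) = b ∧
      1000 * (b * (r - 1) - (s + (b - a) * q)) ^ 2 <
        693 * Nat.log 2 (a ^ 4) * (a + 1) ^ 2 * s) :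
    Checkpoint b r (s + (b - a) * q) := by
  subst hM
  obtain ⟨hmq, hrm, hqr, hr, hcount, hbound⟩ := hcheck
  have hnth := nth_prime_eq_of_count_coprime h.nth_prime_eq hmq hrm hqr hr hcount
  have hsum : s + (b - a) * q ≤ primeSum b := by
    rw [← h.nth_prime_eq]
    exact (Nat.add_le_add_right h.le_primeSum _).trans (primeSum_add_mul_nth_prime_le (by omega))
  refine ⟨hnth, hsum, fun n hn hnb ↦ ?_⟩
  rcases lt_or_ge n a with hna | han
  · exact h.primeSumBound n hn hna
  · exact primeSumBound_of_mem_block han hnb h.le_primeSum hsum (by rwa [hnth])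

lemma primorial_four : primorial 4 = 6 := by decide +kernel

lemma primorial_sixteen : primorial 16 = 30030 := by decide +kernel

lemma primorial_hundred : primorial 100 = 2305567963945518424753102147331756070 := by
  decide +kernel

lemma primeSumBound_of_small {n : ℕ} (hn : 2 ≤ n) (hlt : n < 1024) : PrimeSumBound n :=
  checkpoint_two
    |>.next primorial_four 3 7 (by decide +kernel)
    |>.next primorial_four 4 11 (by decide +kernel)
    |>.next primorial_four 5 13 (by decide +kernel)
    |>.next primorial_four 7 19 (by decide +kernel)
    |>.next primorial_sixteen 9 29 (by decide +kernel)
    |>.next primorial_sixteen 11 37 (by decide +kernel)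
    |>.next primorial_sixteen 14 47 (by decide +kernel)
    |>.next primorial_sixteen 18 67 (by decide +kernel)
    |>.next primorial_sixteen 23 89 (by decide +kernel)
    |>.next primorial_sixteen 30 127 (by decide +kernel)
    |>.next primorial_sixteen 39 173 (by decide +kernel)
    |>.next primorial_sixteen 52 241 (by decide +kernel)
    |>.next primorial_hundred 67 337 (by decide +kernel)
    |>.next primorial_hundred 89 463 (by decide +kernel)
    |>.next primorial_hundred 117 647 (by decide +kernel)
    |>.next primorial_hundred 153 887 (by decide +kernel)
    |>.next primorial_hundred 203 1249 (by decide +kernel)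
    |>.next primorial_hundred 269 1733 (by decide +kernel)
    |>.next primorial_hundred 359 2423 (by decide +kernel)
    |>.next primorial_hundred 476 3389 (by decide +kernel)
    |>.next primorial_hundred 636 4723 (by decide +kernel)
    |>.next primorial_hundred 854 6619 (by decide +kernel)
    |>.next primorial_hundred 1024 8167 (by decide +kernel)
    |>.primeSumBound n hn hlt

theorem stmt9 (n : ℕ) (hn : 2 ≤ n) :
    Real.sqrt (avgPrime (n + 1)) - Real.sqrt (avgPrime n) < Real.sqrt (Real.log n / n) := by
  rcases lt_or_ge n 1024 with hlt | hge
  · exact (primeSumBound_of_small hn hlt).sqrt_avgPrime_sub_lt hn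
  · exact (primeSumBound_of_large hge).sqrt_avgPrime_sub_lt hn
end

section
/- For every real m ≥ 1, the averaged-prime analogue of the Legendre conjecture holds: π̄((m+1)²) > π̄(m²), i.e. there is at least one averaged prime strictly between m² and (m+1)² (more precisely, some index i with m² < p̄_i ≤ (m+1)²). -/
open Finset Real

/-!
Since `p_k ≥ 2 k - 1`, the averaged primes satisfy `p̄_n ≥ n`, and in particular they are unbounded.
Their gaps are `p̄_{n+1} - p̄_n = (p_{n+1} - p̄_n) / (n + 1)`, so the Chebyshev-type bound
`p_k ^ 2 ≤ 4 k ^ 3` makes them at most `2 √(n + 1)`. If `p̄_n` is the last averaged prime before the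
sequence first exceeds `m ^ 2`, then `n ≤ p̄_n ≤ m ^ 2`, and the next gap is at most
`2 √(m ^ 2 + 1) ≤ 2 m + 1`; if there is no such `n`, then `p̄_1 = 2 ≤ (m + 1) ^ 2`. Either way the
sequence cannot jump over `(m ^ 2, (m + 1) ^ 2]`.
-/

lemma log_le_div_add_log_sub_one {a x : ℝ} (ha : 0 < a) (hx : 0 < x) :
    log x ≤ x / a + log a - 1 := by
  have h := log_le_sub_one_of_pos (div_pos hx ha)
  rw [log_div hx.ne' ha.ne'] at h
  linarith

lemma two_thirds_mul_sq_le_primeCounting {q : ℕ} {t : ℝ} (hq : t ^ 3 = q) (ht : 6 ≤ t) :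
    2 / 3 * t ^ 2 ≤ Nat.primeCounting q := by
  have t_pos : 0 < t := by linarith
  have one_lt_q : (1 : ℝ) < q := hq ▸ one_lt_pow₀ (by linarith) (by norm_num)
  have log_q_pos : 0 < log q := log_pos one_lt_q
  have log_q_le : log q ≤ 0.375 * t + 3.2387 := by
    have log_q : log q = 3 * log t := by rw [← hq, log_pow]; norm_num
    have log_eight : log 8 = 3 * log 2 := by
      rw [show (8 : ℝ) = 2 ^ 3 by norm_num, log_pow]; norm_num
    -- At `t = 6`, the worst case, the tangent at `8 = 2 ^ 3` is still close enough to `log`.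
    have tangent_at_eight := log_le_div_add_log_sub_one (a := 8) (by norm_num) t_pos
    linarith [log_two_lt_d9]
  have log_succ_le : log (q + 1) ≤ log 2 + log q := by
    rw [← log_mul two_ne_zero (by positivity)]
    exact log_le_log (by positivity) (by linarith)
  have cubic_bound : (1 + 2 / 3 * t ^ 2) * (0.375 * t + 3.2387) ≤ 0.693 * t ^ 3 - 0.6932 := by
    nlinarith [mul_nonneg (sq_nonneg t) (sub_nonneg.2 ht), mul_nonneg t_pos.le (sub_nonneg.2 ht)]
  refine le_trans ?_ (Chebyshev.pi_ge q)
  rw [le_div_iff₀ log_q_pos]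
  have log_q_mul_le : (1 + 2 / 3 * t ^ 2) * log q ≤ (1 + 2 / 3 * t ^ 2) * (0.375 * t + 3.2387) := by
    gcongr
  have log_two_mul_ge : 0.693 * t ^ 3 ≤ q * log 2 := by
    rw [← hq, mul_comm]
    gcongr
    linarith [log_two_gt_d9]
  linarith [log_two_lt_d9]

lemma sq_le_four_mul_primeCounting_pow_three {q : ℕ} (hq : 2 ≤ q) :
    q ^ 2 ≤ 4 * Nat.primeCounting q ^ 3 := by
  rcases lt_or_ge q 216 with q_lt | q_ge
  · have small_cases : ∀ r < 216, 2 ≤ r → r ^ 2 ≤ 4 * Nat.primeCounting r ^ 3 := by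
      decide +kernel
    exact small_cases q q_lt hq
  · obtain ⟨t, t_nonneg, ht⟩ : ∃ t : ℝ, 0 ≤ t ∧ t ^ 3 = q :=
      ⟨(q : ℝ) ^ ((3 : ℕ) : ℝ)⁻¹, by positivity, rpow_inv_natCast_pow q.cast_nonneg three_ne_zero⟩
    have six_le_t : 6 ≤ t := by
      refine le_of_pow_le_pow_left₀ three_ne_zero t_nonneg ?_
      rw [ht]
      exact_mod_cast q_ge
    have cube_le : (2 / 3 * t ^ 2) ^ 3 ≤ (Nat.primeCounting q : ℝ) ^ 3 := by
      gcongr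
      exact two_thirds_mul_sq_le_primeCounting ht six_le_t
    have : (q : ℝ) ^ 2 ≤ 4 * (Nat.primeCounting q : ℝ) ^ 3 := by
      calc (q : ℝ) ^ 2 = t ^ 6 := by rw [← ht]; ring
        _ ≤ 4 * (2 / 3 * t ^ 2) ^ 3 := by nlinarith [pow_nonneg t_nonneg 6]
        _ ≤ 4 * (Nat.primeCounting q : ℝ) ^ 3 := by gcongr
    exact_mod_cast this

lemma prime_nthPrime (n : ℕ) : (nthPrime n).Prime :=
  Nat.prime_nth_prime _

lemma nthPrime_one : nthPrime 1 = 2 :=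
  Nat.nth_prime_zero_eq_two

lemma primeCounting_nthPrime_succ (n : ℕ) : Nat.primeCounting (nthPrime (n + 1)) = n + 1 := by
  rw [nthPrime, Nat.add_sub_cancel, Nat.primeCounting, Nat.primeCounting',
    Nat.count_nth_succ_of_infinite Nat.infinite_setOfPred_prime]

lemma nthPrime_succ_sq_le (n : ℕ) : nthPrime (n + 1) ^ 2 ≤ 4 * (n + 1) ^ 3 := by
  simpa only [primeCounting_nthPrime_succ] using
    sq_le_four_mul_primeCounting_pow_three (prime_nthPrime (n + 1)).two_le

lemma nthPrime_succ_lt_nthPrime_succ_succ (n : ℕ) : nthPrime (n + 1) < nthPrime (n + 2) :=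
  Nat.nth_strictMono Nat.infinite_setOfPred_prime n.lt_succ_self

lemma odd_nthPrime_add_two (n : ℕ) : Odd (nthPrime (n + 2)) := by
  refine (prime_nthPrime _).odd_of_ne_two (ne_of_gt ?_)
  exact (prime_nthPrime (n + 1)).two_le.trans_lt (nthPrime_succ_lt_nthPrime_succ_succ n)

lemma two_mul_add_one_le_nthPrime_succ : ∀ n : ℕ, 2 * n + 1 ≤ nthPrime (n + 1)
  | 0 => (prime_nthPrime 1).one_le
  | 1 => by
    have lt_next := nthPrime_succ_lt_nthPrime_succ_succ 0
    rw [nthPrime_one] at lt_next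
    exact lt_next
  | n + 2 => by
    have ih := two_mul_add_one_le_nthPrime_succ (n + 1)
    have lt_next := nthPrime_succ_lt_nthPrime_succ_succ (n + 1)
    obtain ⟨a, ha⟩ := odd_nthPrime_add_two n
    obtain ⟨b, hb⟩ := odd_nthPrime_add_two (n + 1)
    lia

lemma sq_le_sum_nthPrime (n : ℕ) : n ^ 2 ≤ ∑ i ∈ Icc 1 n, nthPrime i := by
  induction n with
  | zero => simp
  | succ n ih =>
    rw [sum_Icc_succ_top n.succ_pos]
    linarith [two_mul_add_one_le_nthPrime_succ n]

lemma natCast_mul_avgPrime (n : ℕ) :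
    (n : ℝ) * avgPrime n = ∑ i ∈ Icc 1 n, (nthPrime i : ℝ) := by
  rcases eq_or_ne n 0 with rfl | hn
  · simp
  · rw [avgPrime]
    field_simp

lemma natCast_le_avgPrime (n : ℕ) : (n : ℝ) ≤ avgPrime n := by
  rcases n.eq_zero_or_pos with rfl | hn
  · simp [avgPrime]
  · refine le_of_mul_le_mul_left ?_ (Nat.cast_pos.2 hn)
    rw [natCast_mul_avgPrime, ← sq]
    exact_mod_cast sq_le_sum_nthPrime n

lemma avgGap_eq (n : ℕ) : avgGap n = (nthPrime (n + 1) - avgPrime n) / (n + 1) := by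
  have sum_succ := natCast_mul_avgPrime (n + 1)
  rw [sum_Icc_succ_top n.succ_pos, ← natCast_mul_avgPrime, Nat.cast_succ] at sum_succ
  rw [avgGap, eq_div_iff n.cast_add_one_ne_zero]
  linarith

lemma avgGap_le_two_mul_sqrt (n : ℕ) : avgGap n ≤ 2 * √(n + 1) := by
  have avgPrime_nonneg : 0 ≤ avgPrime n := n.cast_nonneg.trans (natCast_le_avgPrime n)
  have nthPrime_le : (nthPrime (n + 1) : ℝ) ≤ 2 * √(n + 1) * (n + 1) := by
    refine le_of_sq_le_sq ?_ (by positivity)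
    calc (nthPrime (n + 1) : ℝ) ^ 2 ≤ 4 * (n + 1) ^ 3 := by exact_mod_cast nthPrime_succ_sq_le n
      _ = 4 * √(n + 1) ^ 2 * (n + 1) ^ 2 := by rw [sq_sqrt (by positivity)]; ring
      _ = (2 * √(n + 1) * (n + 1)) ^ 2 := by ring
  rw [avgGap_eq, div_le_iff₀ n.cast_add_one_pos]
  linarith

lemma avgPrime_succ_le_add_one_sq {n : ℕ} {m : ℝ} (hn : 1 ≤ n) (hm : 0 ≤ m)
    (h : avgPrime n ≤ m ^ 2) : avgPrime (n + 1) ≤ (m + 1) ^ 2 := by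
  have n_le : (n : ℝ) ≤ m ^ 2 := (natCast_le_avgPrime n).trans h
  have one_le_m : 1 ≤ m := by
    have : (1 : ℝ) ≤ n := by exact_mod_cast hn
    nlinarith
  have sqrt_le : √(n + 1) ≤ m + 1 / 2 := sqrt_le_iff.2 ⟨by positivity, by nlinarith⟩
  have gap_le := avgGap_le_two_mul_sqrt n
  rw [avgGap] at gap_le
  linarith

-- The junk value `1 / 0 = 0` makes index `0` a starting point below every `m ^ 2`.
lemma avgPrime_zero : avgPrime 0 = 0 := by simp [avgPrime]

lemma avgPrime_one : avgPrime 1 = 2 := by simp [avgPrime, nthPrime_one]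

lemma exists_avgPrime_mem_Ioc_sq {m : ℝ} (hm : √2 - 1 ≤ m) :
    ∃ n : ℕ, avgPrime (n + 1) ∈ Set.Ioc (m ^ 2) ((m + 1) ^ 2) := by
  have m_nonneg : 0 ≤ m := by linarith [one_le_sqrt.2 (one_le_two (α := ℝ))]
  have unbounded : ∃ n, m ^ 2 < avgPrime n := by
    obtain ⟨n, hn⟩ := exists_nat_gt (m ^ 2)
    exact ⟨n, hn.trans_le (natCast_le_avgPrime n)⟩
  have start : ¬ m ^ 2 < avgPrime 0 := by
    rw [avgPrime_zero]
    exact (sq_nonneg m).not_gt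
  obtain ⟨n, sq_not_lt, sq_lt_succ⟩ := Nat.exists_not_and_succ_of_not_zero_of_exists start unbounded
  refine ⟨n, sq_lt_succ, ?_⟩
  rcases n.eq_zero_or_pos with rfl | hn
  · rw [zero_add, avgPrime_one]
    exact (sqrt_le_left (by positivity)).1 (by linarith)
  · exact avgPrime_succ_le_add_one_sq hn m_nonneg (not_lt.1 sq_not_lt)

lemma finite_setOf_avgPrime_le (x : ℝ) : {i : ℕ | 1 ≤ i ∧ avgPrime i ≤ x}.Finite :=
  (Set.finite_Iic ⌊x⌋₊).subset fun i hi ↦ Nat.le_floor ((natCast_le_avgPrime i).trans hi.2)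

lemma avgPrimeCount_lt_avgPrimeCount {x y : ℝ} {i : ℕ} (hi : 1 ≤ i)
    (h : avgPrime i ∈ Set.Ioc x y) : avgPrimeCount x < avgPrimeCount y := by
  refine Set.ncard_lt_ncard ?_ (finite_setOf_avgPrime_le y)
  refine (Set.ssubset_iff_of_subset ?_).2 ⟨i, ⟨hi, h.2⟩, fun hx ↦ h.1.not_ge hx.2⟩
  exact fun j hj ↦ ⟨hj.1, hj.2.trans (h.1.trans_le h.2).le⟩

-- The constant `√2 - 1` is sharp: for `0 ≤ m < √2 - 1` no averaged prime is `≤ (m + 1) ^ 2`,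
-- since the smallest one is `2`.
theorem stmt11_general {m : ℝ} (hm : √2 - 1 ≤ m) :
    avgPrimeCount (m ^ 2) < avgPrimeCount ((m + 1) ^ 2) := by
  obtain ⟨n, hn⟩ := exists_avgPrime_mem_Ioc_sq hm
  exact avgPrimeCount_lt_avgPrimeCount n.succ_pos hn

theorem stmt11 (m : ℝ) (hm : 1 ≤ m) :
    avgPrimeCount ((m + 1) ^ 2) > avgPrimeCount (m ^ 2) :=
  stmt11_general (by linarith [sqrt_le_iff.2 ⟨zero_le_two, (by norm_num : (2 : ℝ) ≤ 2 ^ 2)⟩])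
end

section
/- For every real m ≥ 1, the number of averaged primes between consecutive squares satisfies the quantitative Legendre-type bound π̄((m+1)²) − π̄(m²) ≥ (2m − 1)/(2·ln(m+1)). -/
open Finset Real

/-!
Let `S` be the sum of the first `n` primes and `q` the next prime. The `n`-th gap between averaged
primes is `(n q - S) / (n (n + 1))`, and for `n ≥ 5` it is at most `0.87 log p̄_n`. For `q ≥ 10⁴`
this follows from lower bounds for `n` and `S` of strength `0.918 q / log q` and
`0.339 q² / log q`, which come from Chebyshev's estimates of `ψ` through the quotient
`N! ⌊N/30⌋! / (⌊N/2⌋! ⌊N/3⌋! ⌊N/5⌋!)` and partial summation; for `q < 10⁴` it is a computation.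

The gaps that meet `(m², (m+1)²]` are therefore at most `1.74 log (m + 1)` and cover a length of at
least `2 m + 1`, so the interval contains at least `(2 m + 1) / (1.74 log (m + 1)) - 1` averaged
primes, which suffices as soon as `m ≥ 2.4`. Smaller `m` are settled by the values
`p̄_2, …, p̄_7`.
-/

namespace AveragedPrimes

open scoped Nat Chebyshev ArithmeticFunction.vonMangoldt

/-! ### Kernel-evaluated scans -/

/-- `scan p step check f k s` tests `check j t` for `j = k, …, k + f - 1`, where the state `t`
starts as `s` and is updated by `step j` after each `j` satisfying `p`. The recursion is structural
so that the kernel can evaluate it, and it branches on `p` outside `step` because this keeps the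
state fully evaluated. -/
def scan {σ : Type*} (p : ℕ → Bool) (step : ℕ → σ → σ) (check : ℕ → σ → Bool) :
    ℕ → ℕ → σ → Bool
  | 0, _, _ => true
  | f + 1, k, s =>
    check k s && bif p k then scan p step check f (k + 1) (step k s)
      else scan p step check f (k + 1) s

theorem check_of_scan {σ : Type*} {p : ℕ → Bool} {step : ℕ → σ → σ} {check : ℕ → σ → Bool}
    {t : ℕ → σ} {f k : ℕ}
    (ht : ∀ j, k ≤ j → j < k + f → t (j + 1) = bif p j then step j (t j) else t j)
    (hscan : scan p step check f k (t k) = true) {j : ℕ} (hkj : k ≤ j) (hjf : j < k + f) :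
    check j (t j) = true := by
  induction f generalizing k with
  | zero => lia
  | succ f ih =>
    rw [scan, Bool.and_eq_true] at hscan
    obtain rfl | hlt := hkj.eq_or_lt
    · exact hscan.1
    · refine ih (fun i hi hif ↦ ht i (by lia) (by lia)) ?_ hlt (by lia)
      rw [ht k le_rfl (by lia), Bool.apply_cond (scan p step check f (k + 1))]
      exact hscan.2

/-! ### Chebyshev's bounds -/

theorem log_le_div_sub_one_add_log {x c : ℝ} (hx : 0 < x) (hc : 0 < c) :
    log x ≤ x / c - 1 + log c := by
  have h := log_le_sub_one_of_pos (div_pos hx hc)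
  rw [log_div hx.ne' hc.ne'] at h
  linarith

theorem log_factorial_eq_sum_vonMangoldt (N : ℕ) :
    log N ! = ∑ d ∈ Ioc 0 N, Λ d * ((N / d : ℕ) : ℝ) := by
  rw [← ArithmeticFunction.sum_Ioc_mul_zeta_eq_sum, ArithmeticFunction.vonMangoldt_mul_zeta]
  induction N with
  | zero => simp
  | succ n ih =>
    rw [sum_Ioc_succ_top n.zero_le, ← ih, Nat.factorial_succ, Nat.cast_mul,
      log_mul (by positivity) (by positivity), add_comm, ArithmeticFunction.log_apply]

theorem log_factorial_div_eq_sum_vonMangoldt (N k : ℕ) :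
    log (N / k)! = ∑ d ∈ Ioc 0 N, Λ d * ((N / d / k : ℕ) : ℝ) := by
  rw [log_factorial_eq_sum_vonMangoldt]
  simp only [Nat.div_right_comm N _ k]
  refine sum_subset (Ioc_subset_Ioc_right (N.div_le_self k)) fun d hd hd' ↦ ?_
  simp only [mem_Ioc, not_and, not_le] at hd hd'
  rw [Nat.div_eq_of_lt (hd' hd.1), Nat.cast_zero, mul_zero]

/-- Chebyshev's coefficient function `⌊t⌋ - ⌊t/2⌋ - ⌊t/3⌋ - ⌊t/5⌋ + ⌊t/30⌋` at integers `t`,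
the multiplicity of `Λ d` in `chebyshevLog N` for `t = N / d`. -/
def chebyshevWeight (q : ℕ) : ℤ :=
  q - (q / 2 : ℕ) - (q / 3 : ℕ) - (q / 5 : ℕ) + (q / 30 : ℕ)

theorem chebyshevWeight_nonneg (q : ℕ) : 0 ≤ chebyshevWeight q := by
  unfold chebyshevWeight; lia

theorem chebyshevWeight_le_one (q : ℕ) : chebyshevWeight q ≤ 1 := by
  unfold chebyshevWeight; lia

theorem chebyshevWeight_eq_one {q : ℕ} (hq : 1 ≤ q) (hq' : q < 6) : chebyshevWeight q = 1 := by
  unfold chebyshevWeight; lia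

/-- The logarithm of Chebyshev's quotient `N! ⌊N/30⌋! / (⌊N/2⌋! ⌊N/3⌋! ⌊N/5⌋!)`. -/
noncomputable def chebyshevLog (N : ℕ) : ℝ :=
  log N ! - log (N / 2)! - log (N / 3)! - log (N / 5)! + log (N / 30)!

theorem chebyshevLog_eq_sum_vonMangoldt (N : ℕ) :
    chebyshevLog N = ∑ d ∈ Ioc 0 N, Λ d * (chebyshevWeight (N / d) : ℝ) := by
  simp only [chebyshevLog, chebyshevWeight, log_factorial_div_eq_sum_vonMangoldt,
    log_factorial_eq_sum_vonMangoldt N, ← sum_sub_distrib, ← sum_add_distrib]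
  refine sum_congr rfl fun d _ ↦ ?_
  simp only [Int.cast_sub, Int.cast_add, Int.cast_natCast]
  ring

theorem psi_natCast_eq_sum (N : ℕ) : ψ N = ∑ d ∈ Ioc 0 N, Λ d := by
  rw [Chebyshev.psi, Nat.floor_natCast]

theorem chebyshevLog_le_psi (N : ℕ) : chebyshevLog N ≤ ψ N := by
  rw [chebyshevLog_eq_sum_vonMangoldt, psi_natCast_eq_sum]
  refine sum_le_sum fun d _ ↦ mul_le_of_le_one_right ArithmeticFunction.vonMangoldt_nonneg ?_
  exact_mod_cast chebyshevWeight_le_one (N / d)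

theorem psi_sub_psi_div_six_le_chebyshevLog (N : ℕ) :
    ψ N - ψ (N / 6 : ℕ) ≤ chebyshevLog N := by
  have hsplit (f : ℕ → ℝ) := sum_Ioc_consecutive f (Nat.zero_le (N / 6)) (N.div_le_self 6)
  rw [chebyshevLog_eq_sum_vonMangoldt, psi_natCast_eq_sum, psi_natCast_eq_sum, ← hsplit, ← hsplit,
    add_sub_cancel_left]
  have hlow : 0 ≤ ∑ d ∈ Ioc 0 (N / 6), Λ d * (chebyshevWeight (N / d) : ℝ) :=
    sum_nonneg fun d _ ↦ mul_nonneg ArithmeticFunction.vonMangoldt_nonneg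
      (by exact_mod_cast chebyshevWeight_nonneg (N / d))
  have hhigh : ∑ d ∈ Ioc (N / 6) N, Λ d * (chebyshevWeight (N / d) : ℝ) =
      ∑ d ∈ Ioc (N / 6) N, Λ d := by
    refine sum_congr rfl fun d hd ↦ ?_
    rw [mem_Ioc] at hd
    have hq : 1 ≤ N / d := (Nat.one_le_div_iff (by lia)).2 hd.2
    have hq' : N / d < 6 := by rw [Nat.div_lt_iff_lt_mul (by lia)]; lia
    rw [chebyshevWeight_eq_one hq hq', Int.cast_one, mul_one]
  linarith

/-- The main term `x log x - x` of Stirling's formula for `log x!`. -/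
noncomputable def stirlingMain (x : ℝ) : ℝ := x * log x - x

theorem stirlingMain_le_stirlingMain {x y : ℝ} (hx : 1 ≤ x) (hxy : x ≤ y) :
    stirlingMain x ≤ stirlingMain y := by
  have hx0 : 0 < x := by linarith
  have hy0 : 0 < y := by linarith
  have hlog : y - x ≤ y * (log y - log x) := by
    have h := one_sub_inv_le_log_of_pos (div_pos hy0 hx0)
    rw [log_div hy0.ne' hx0.ne', inv_div] at h
    calc y - x = y * (1 - x / y) := by field_simp
      _ ≤ y * (log y - log x) := by gcongr
  have hnonneg : 0 ≤ (y - x) * log x := mul_nonneg (by linarith) (log_nonneg hx)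
  unfold stirlingMain
  linarith

theorem log_factorial_le {n : ℕ} (hn : n ≠ 0) :
    log n ! ≤ stirlingMain n + log n / 2 + 1 := by
  obtain ⟨k, rfl⟩ := Nat.exists_eq_succ_of_ne_zero hn
  have h : log (Stirling.stirlingSeq (k + 1)) ≤ log (Stirling.stirlingSeq 1) :=
    Stirling.log_stirlingSeq'_antitone k.zero_le
  rw [Stirling.log_stirlingSeq_formula, Stirling.stirlingSeq_one,
    log_div (exp_pos 1).ne' (by positivity), log_exp, log_sqrt (by norm_num),
    log_mul (by norm_num) (by positivity), log_div (by positivity) (by positivity), log_exp] at h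
  unfold stirlingMain
  linarith

theorem le_log_factorial {n : ℕ} (hn : n ≠ 0) :
    stirlingMain n + log n / 2 + 1 / 2 ≤ log n ! := by
  have hpi : 1 ≤ log (2 * π) := by
    rw [le_log_iff_exp_le (by positivity)]
    linarith [exp_one_lt_three, pi_gt_three]
  have h := Stirling.le_log_factorial_stirling hn
  unfold stirlingMain
  linarith

theorem log_factorial_div_le {N k : ℕ} (hk : 0 < k) (hkN : k ≤ N) :
    log (N / k)! ≤ stirlingMain (N / k) + log (N / k) / 2 + 1 := by
  have hq : 1 ≤ N / k := (Nat.one_le_div_iff hk).2 hkN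
  have hqR : (1 : ℝ) ≤ (N / k : ℕ) := by exact_mod_cast hq
  have hle : ((N / k : ℕ) : ℝ) ≤ N / k := Nat.cast_div_le
  have hmain := stirlingMain_le_stirlingMain hqR hle
  have hlog := log_le_log (by linarith) hle
  linarith [log_factorial_le (Nat.one_le_iff_ne_zero.1 hq)]

theorem le_log_factorial_div {N k : ℕ} (hk : 0 < k) (hkN : k ≤ N) :
    stirlingMain (N / k) - log (N / k) / 2 + 0.15 ≤ log (N / k)! := by
  have hx : 1 ≤ (N : ℝ) / k := (one_le_div (by positivity)).2 (by exact_mod_cast hkN)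
  have hle : (N : ℝ) / k ≤ (N / k + 1 : ℕ) := by
    rw [← Nat.floor_div_eq_div (K := ℝ)]
    exact_mod_cast (Nat.lt_floor_add_one _).le
  have hle' : ((N / k : ℕ) : ℝ) ≤ N / k := Nat.cast_div_le
  have hmain := stirlingMain_le_stirlingMain hx hle
  have hlog : log (N / k + 1 : ℕ) ≤ log 2 + log (N / k) := by
    rw [← log_mul (by norm_num) (by linarith)]
    refine log_le_log (by positivity) ?_
    push_cast
    linarith
  have h := le_log_factorial (N / k).succ_ne_zero
  rw [Nat.factorial_succ, Nat.cast_mul, log_mul (by positivity) (by positivity)] at h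
  linarith [log_two_lt_d9]

/-- Chebyshev's constant `A = 0.92129…`, the rate of linear growth of `chebyshevLog`. -/
noncomputable def chebyshevConst : ℝ := log 2 / 2 + log 3 / 3 + log 5 / 5 - log 30 / 30

theorem log_thirty : log 30 = log 2 + log 3 + log 5 := by
  rw [← log_mul (by norm_num) (by norm_num), ← log_mul (by norm_num) (by norm_num)]
  norm_num

theorem chebyshevConst_gt : 0.9212 < chebyshevConst := by
  rw [chebyshevConst, log_thirty]
  linarith [log_two_gt_d9, log_three_gt_d9, log_five_gt_d9]

theorem chebyshevConst_lt : chebyshevConst < 0.9213 := by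
  rw [chebyshevConst, log_thirty]
  linarith [log_two_lt_d9, log_three_lt_d9, log_five_lt_d9]

theorem stirlingMain_combination {x : ℝ} (hx : x ≠ 0) :
    stirlingMain x - stirlingMain (x / 2) - stirlingMain (x / 3) - stirlingMain (x / 5)
      + stirlingMain (x / 30) = chebyshevConst * x := by
  simp only [stirlingMain, chebyshevConst, ne_eq, hx, not_false_eq_true, OfNat.ofNat_ne_zero,
    log_div]
  ring

theorem log_combination {x : ℝ} (hx : x ≠ 0) :
    log x + log (x / 2) + log (x / 3) + log (x / 5) + log (x / 30) =
      5 * log x - 2 * log 30 := by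
  simp only [ne_eq, hx, not_false_eq_true, OfNat.ofNat_ne_zero, log_div]
  rw [log_thirty]
  ring

theorem abs_chebyshevLog_sub_le {N : ℕ} (hN : 30 ≤ N) :
    |chebyshevLog N - chebyshevConst * N| ≤ 2.5 * log N := by
  have upper (k : ℕ) (hk : 0 < k) (hk' : k ≤ 30) := log_factorial_div_le hk (hk'.trans hN)
  have lower (k : ℕ) (hk : 0 < k) (hk' : k ≤ 30) := le_log_factorial_div hk (hk'.trans hN)
  have upper_one := upper 1 (by norm_num) (by norm_num)
  have lower_one := lower 1 (by norm_num) (by norm_num)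
  simp only [Nat.div_one, Nat.cast_one, div_one] at upper_one lower_one
  have hN0 : (N : ℝ) ≠ 0 := by positivity
  have hmain := stirlingMain_combination hN0
  have hlog := log_combination hN0
  have hlog30 : 3 ≤ log 30 := by
    rw [log_thirty]
    linarith [log_two_gt_d9, log_three_gt_d9, log_five_gt_d9]
  unfold chebyshevLog
  rw [abs_le]
  constructor
  · linarith [upper 2 (by norm_num) (by norm_num), upper 3 (by norm_num) (by norm_num),
      upper 5 (by norm_num) (by norm_num), lower 30 (by norm_num) (by norm_num)]
  · linarith [lower 2 (by norm_num) (by norm_num), lower 3 (by norm_num) (by norm_num),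
      lower 5 (by norm_num) (by norm_num), upper 30 (by norm_num) (by norm_num)]

theorem le_psi {N : ℕ} (hN : 30 ≤ N) : 0.9212 * N - 2.5 * log N ≤ ψ N := by
  have hlog := (abs_le.1 (abs_chebyshevLog_sub_le hN)).1
  have hconst : 0.9212 * N ≤ chebyshevConst * N := by gcongr; exact chebyshevConst_gt.le
  linarith [chebyshevLog_le_psi N]

theorem psi_le_psi_div_six_add {N : ℕ} (hN : 30 ≤ N) :
    ψ N ≤ ψ (N / 6 : ℕ) + 0.9213 * N + 2.5 * log N := by
  have hlog := (abs_le.1 (abs_chebyshevLog_sub_le hN)).2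
  have hconst : chebyshevConst * N ≤ 0.9213 * N := by gcongr; exact chebyshevConst_lt.le
  linarith [psi_sub_psi_div_six_le_chebyshevLog N]

theorem lcmUpto_succ (n : ℕ) : Nat.lcmUpto (n + 1) = (Nat.lcmUpto n).lcm (n + 1) := by
  rw [Nat.lcmUpto, ← insert_Icc_right_eq_Icc_add_one (by lia), lcm_insert, lcm_comm]
  rfl

set_option maxRecDepth 100000 in
theorem lcmUpto_le_three_pow {N : ℕ} (hN : N ≤ 1700) : Nat.lcmUpto N ≤ 3 ^ N := by
  have hscan : scan (fun _ ↦ true) (fun k l ↦ l.lcm (k + 1)) (fun k l ↦ decide (l ≤ 3 ^ k))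
      1701 0 (Nat.lcmUpto 0) = true := by decide +kernel
  simpa using check_of_scan (fun j _ _ ↦ lcmUpto_succ j) hscan N.zero_le (by lia)

theorem psi_natCast_le (N : ℕ) : ψ N ≤ 1.12 * N := by
  induction N using Nat.strong_induction_on with
  | h N ih =>
    obtain hN | hN := le_or_gt N 1700
    · calc ψ N = log (Nat.lcmUpto N) := by rw [Chebyshev.psi_eq_log_lcmUpto]
        _ ≤ log ((3 : ℝ) ^ N) :=
          log_le_log (by exact_mod_cast Nat.lcmUpto_pos N)
            (by exact_mod_cast lcmUpto_le_three_pow hN)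
        _ = N * log 3 := log_pow 3 N
        _ ≤ 1.12 * N := by
          rw [mul_comm]
          gcongr
          linarith [log_three_lt_d9]
    · -- Iterating `N ↦ N / 6` costs a factor `6 / 5`, and `6 / 5 * 0.9213 < 1.12`.
      have hNR : (1700 : ℝ) < N := by exact_mod_cast hN
      have hdiv : ((N / 6 : ℕ) : ℝ) ≤ N / 6 := Nat.cast_div_le
      have hlog := log_le_div_sub_one_add_log (x := N) (c := 2 ^ 11) (by linarith) (by norm_num)
      rw [log_pow] at hlog
      push_cast at hlog
      linarith [psi_le_psi_div_six_add (N := N) (by lia), ih (N / 6) (by lia), log_two_lt_d9]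

theorem psi_le {x : ℝ} (hx : 0 ≤ x) : ψ x ≤ 1.12 * x := by
  rw [Chebyshev.psi_eq_psi_coe_floor]
  linarith [psi_natCast_le ⌊x⌋₊, Nat.floor_le hx]

theorem log_le_div_thousand {x : ℝ} (hx : 10000 ≤ x) : log x ≤ x / 1000 := by
  have hlog := log_le_div_sub_one_add_log (x := x) (c := 2 ^ 13) (by linarith) (by norm_num)
  rw [log_pow] at hlog
  push_cast at hlog
  linarith [log_two_lt_d9]

theorem le_psi_of_ten_thousand_le {N : ℕ} (hN : 10000 ≤ N) : 0.918 * N ≤ ψ N := by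
  have hlog := log_le_div_thousand (x := N) (by exact_mod_cast hN)
  linarith [le_psi (N := N) (by lia)]

theorem rpow_inv_le {x y : ℝ} {k : ℕ} (hx : 0 ≤ x) (hy : 0 ≤ y) (hk : k ≠ 0) (hxy : x ≤ y ^ k) :
    x ^ (k : ℝ)⁻¹ ≤ y := by
  rwa [rpow_inv_le_iff_of_pos hx hy (by positivity), rpow_natCast]

theorem le_theta_of_ten_thousand_le {N : ℕ} (hN : 10000 ≤ N) : 0.9 * N ≤ θ N := by
  have hNR : (10000 : ℝ) ≤ N := by exact_mod_cast hN
  have hsqrt : (N : ℝ) ^ (2 : ℝ)⁻¹ ≤ N / 100 :=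
    rpow_inv_le (k := 2) (by positivity) (by positivity) (by norm_num) (by nlinarith)
  have hcbrt : (N : ℝ) ^ (3 : ℝ)⁻¹ ≤ N / 400 := by
    refine rpow_inv_le (k := 3) (by positivity) (by positivity) (by norm_num) ?_
    have : (10000 : ℝ) ^ 2 ≤ (N : ℝ) ^ 2 := by gcongr
    nlinarith
  have hfifth : (N : ℝ) ^ (5 : ℝ)⁻¹ ≤ (N : ℝ) ^ (3 : ℝ)⁻¹ :=
    rpow_le_rpow_of_exponent_le (by linarith) (by norm_num)
  have hpsi (k : ℝ) : ψ ((N : ℝ) ^ k⁻¹) ≤ 1.12 * (N : ℝ) ^ k⁻¹ := psi_le (by positivity)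
  linarith [Chebyshev.psi_sub_theta_le_psi_add_psi_add_psi (N : ℝ), le_psi_of_ten_thousand_le hN,
    hpsi 2, hpsi 3, hpsi 5]

/-! ### The sum of the primes below a bound -/

theorem sum_range_natCast_mul {R : Type*} [CommRing R] (c : ℕ → R) (n : ℕ) :
    ∑ k ∈ range n, (k : R) * c k =
      n * ∑ k ∈ range n, c k - ∑ k ∈ range n, ∑ i ∈ range (k + 1), c i := by
  induction n with
  | zero => simp
  | succ n ih =>
    simp only [sum_range_succ _ n] at ih ⊢
    rw [ih]
    push_cast
    ring

theorem sum_primesBelow_eq_sum_range {M : Type*} [AddCommMonoid M] (f : ℕ → M) (n : ℕ) :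
    ∑ p ∈ n.primesBelow, f p = ∑ k ∈ range n, if k.Prime then f k else 0 :=
  sum_filter _ _

theorem sum_primesBelow_mul_log (N : ℕ) :
    ∑ p ∈ (N + 1).primesBelow, (p : ℝ) * log p =
      (N + 1) * θ N - ∑ k ∈ range (N + 1), θ k := by
  have htheta (k : ℕ) : θ k = ∑ i ∈ range (k + 1), if i.Prime then log i else 0 := by
    rw [Chebyshev.theta_eq_sum_primesLE_log, Nat.primesLE, sum_primesBelow_eq_sum_range]
  simp only [htheta, sum_primesBelow_eq_sum_range fun p ↦ (p : ℝ) * log p, ← mul_ite_zero]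
  rw [sum_range_natCast_mul]
  push_cast
  rfl

theorem le_sum_primesBelow_mul_log {N : ℕ} (hN : 10000 ≤ N) :
    0.34 * (N : ℝ) ^ 2 ≤ ∑ p ∈ (N + 1).primesBelow, (p : ℝ) * log p := by
  have hNR : (10000 : ℝ) ≤ N := by exact_mod_cast hN
  have hsum : ∑ k ∈ range (N + 1), θ k ≤ 0.56 * (N * (N + 1)) :=
    calc ∑ k ∈ range (N + 1), θ k ≤ ∑ k ∈ range (N + 1), 1.12 * (k : ℝ) :=
          sum_le_sum fun k _ ↦ (Chebyshev.theta_le_psi k).trans (psi_natCast_le k)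
      _ = 0.56 * (N * (N + 1)) := by
          have hgauss : (∑ k ∈ range (N + 1), (k : ℝ)) * 2 = (N + 1) * N := by
            simpa using congrArg (Nat.cast (R := ℝ)) (sum_range_id_mul_two (N + 1))
          rw [← mul_sum]
          linarith
  have htheta : (N + 1) * (0.9 * N) ≤ (N + 1) * θ N := by
    gcongr
    exact le_theta_of_ten_thousand_le hN
  rw [sum_primesBelow_mul_log]
  nlinarith

/-- The sum of the primes less than `n`. -/
def primeSumBelow (n : ℕ) : ℕ := ∑ p ∈ n.primesBelow, p

theorem primeCounting'_succ (n : ℕ) :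
    (n + 1).primeCounting' = if n.Prime then n.primeCounting' + 1 else n.primeCounting' := by
  rw [Nat.primeCounting', Nat.count_succ]
  split_ifs <;> rfl

theorem primeSumBelow_succ (n : ℕ) :
    primeSumBelow (n + 1) = if n.Prime then primeSumBelow n + n else primeSumBelow n := by
  rw [primeSumBelow, Nat.primesBelow_succ]
  split_ifs
  · rw [sum_insert (Nat.notMem_primesBelow n), add_comm, primeSumBelow]
  · rfl

theorem primeSumBelow_le (n : ℕ) : primeSumBelow n ≤ n.primeCounting' * n := by
  rw [primeSumBelow, ← Nat.primesBelow_card_eq_primeCounting', ← smul_eq_mul]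
  exact sum_le_card_nsmul _ _ _ fun p hp ↦ (Nat.lt_of_mem_primesBelow hp).le

theorem le_primeCounting'_add_one_mul_log {N : ℕ} (hN : 10000 ≤ N) :
    0.918 * (N : ℝ) ≤ (N.primeCounting' + 1) * log N := by
  have hsucc : (N.primeCounting : ℝ) ≤ N.primeCounting' + 1 := by
    have := primeCounting'_succ N
    rw [Nat.primeCounting]
    split_ifs at this <;> exact_mod_cast (by lia)
  calc 0.918 * (N : ℝ) ≤ ψ N := le_psi_of_ten_thousand_le hN
    _ ≤ N.primeCounting * log N := by simpa using Chebyshev.psi_le_primeCounting_mul_log N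
    _ ≤ (N.primeCounting' + 1) * log N := by gcongr

theorem le_primeSumBelow_add_mul_log {N : ℕ} (hN : 10000 ≤ N) :
    0.34 * (N : ℝ) ^ 2 ≤ (primeSumBelow N + N) * log N := by
  have hsucc : (primeSumBelow (N + 1) : ℝ) ≤ primeSumBelow N + N := by
    have := primeSumBelow_succ N
    split_ifs at this <;> exact_mod_cast (by lia)
  calc 0.34 * (N : ℝ) ^ 2 ≤ ∑ p ∈ (N + 1).primesBelow, (p : ℝ) * log p :=
        le_sum_primesBelow_mul_log hN
    _ ≤ ∑ p ∈ (N + 1).primesBelow, (p : ℝ) * log N := by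
        refine sum_le_sum fun p hp ↦ ?_
        have hpN : p ≤ N := Nat.le_of_lt_succ (Nat.lt_of_mem_primesBelow hp)
        have hp0 : 0 < p := (Nat.prime_of_mem_primesBelow hp).pos
        gcongr
    _ = primeSumBelow (N + 1) * log N := by rw [← sum_mul, primeSumBelow, Nat.cast_sum]
    _ ≤ (primeSumBelow N + N) * log N := by gcongr

/-! ### The gap inequality -/

section GapLarge

variable {x n S : ℝ}

theorem log_ge_of_ten_thousand_le (hx : 10000 ≤ x) : 9.2 ≤ log x := by
  have h : log 10000 = 4 * (log 2 + log 5) := by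
    rw [← log_mul (by norm_num) (by norm_num), ← log_rpow (by norm_num)]
    norm_num
  linarith [log_le_log (by norm_num) hx, log_two_gt_d9, log_five_gt_d9]

theorem le_of_le_add_one_mul_log (hx : 10000 ≤ x) (hn : 0.918 * x ≤ (n + 1) * log x) :
    917 ≤ n := by
  have hL := log_ge_of_ten_thousand_le hx
  have hle : (n + 1) * log x ≥ 918 * log x := by linarith [log_le_div_thousand hx]
  linarith [le_of_mul_le_mul_right hle (by linarith)]

theorem le_mul_log_of_le_add_mul_log (hx : 10000 ≤ x) (hS : 0.34 * x ^ 2 ≤ (S + x) * log x) :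
    0.339 * x ^ 2 ≤ S * log x := by
  have h : x * log x ≤ x * (x / 1000) := by gcongr; exact log_le_div_thousand hx
  linarith

theorem gap_le_log (hx : 10000 ≤ x)
    (hn : 0.918 * x ≤ (n + 1) * log x) (hS : 0.34 * x ^ 2 ≤ (S + x) * log x) :
    (n * x - S) / (n * (n + 1)) ≤ 0.69 * log x := by
  have hn917 := le_of_le_add_one_mul_log hx hn
  have hL : 0 < log x := by linarith [log_ge_of_ten_thousand_le hx]
  set u := (n + 1) * log x with hu
  -- The larger root in `u` of `0.6892 * u ^ 2 - u * x + 0.34 * x ^ 2` is about `0.907 * x`.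
  have hquad : u * x - 0.34 * x ^ 2 ≤ 0.6892 * u ^ 2 := by
    nlinarith [mul_nonneg (sub_nonneg.2 hn) (by linarith : 0 ≤ x), sq_nonneg (u - 0.918 * x)]
  have hnum : (n * x - S) * log x ≤ 0.6892 * u ^ 2 := by
    rw [hu] at hquad ⊢; linarith
  have hden : 0.6892 * u ^ 2 ≤ 0.69 * log x * (n * (n + 1)) * log x := by
    have h : 0.6892 * (n + 1) ≤ 0.69 * n := by linarith
    calc 0.6892 * u ^ 2 = 0.6892 * (n + 1) * ((n + 1) * log x ^ 2) := by rw [hu]; ring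
      _ ≤ 0.69 * n * ((n + 1) * log x ^ 2) := by gcongr ?_ * _
      _ = 0.69 * log x * (n * (n + 1)) * log x := by ring
  rw [div_le_iff₀ (by positivity)]
  exact le_of_mul_le_mul_right (hnum.trans hden) hL

theorem gap_le_of_mul_log_le (hx : 10000 ≤ x) (hn : 0.918 * x ≤ (n + 1) * log x)
    (hS : 0.34 * x ^ 2 ≤ (S + x) * log x) (hn' : (n + 1) * log x ≤ 2 * x) :
    (n * x - S) / (n * (n + 1)) ≤ 0.87 * log (S / n) := by
  have hn917 := le_of_le_add_one_mul_log hx hn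
  have hL := log_ge_of_ten_thousand_le hx
  have hratio : x / 6 ≤ S / n := by
    rw [le_div_iff₀ (by linarith)]
    refine le_of_mul_le_mul_right (?_ : _ ≤ S * log x) (by linarith)
    have h : x / 6 * ((n + 1) * log x) ≤ x / 6 * (2 * x) := by gcongr
    have hxL : 0 ≤ x * log x := mul_nonneg (by linarith) (by linarith)
    linarith [le_mul_log_of_le_add_mul_log hx hS, sq_nonneg x]
  have hlog : log x - log 6 ≤ log (S / n) := by
    rw [← log_div (by linarith) (by norm_num)]
    exact log_le_log (by linarith) hratio
  have hlog6 : log 6 = log 2 + log 3 := by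
    rw [← log_mul (by norm_num) (by norm_num)]; norm_num
  linarith [gap_le_log hx hn hS, log_two_lt_d9, log_three_lt_d9]

theorem gap_le_of_lt_mul_log (hx : 10000 ≤ x) (hnx : n ≤ x)
    (hS : 0.34 * x ^ 2 ≤ (S + x) * log x) (hn' : 2 * x < (n + 1) * log x) :
    (n * x - S) / (n * (n + 1)) ≤ 0.87 * log (S / n) := by
  have hn917 := le_of_le_add_one_mul_log (n := n) hx (by linarith)
  have hL := log_ge_of_ten_thousand_le hx
  have hSL := le_mul_log_of_le_add_mul_log hx hS
  have hS0 : 0 < S := pos_of_mul_pos_left (by nlinarith : 0 < S * log x) (by linarith)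
  have hgap : (n * x - S) / (n * (n + 1)) ≤ 0.51 * log x := by
    have hx' : x ≤ 0.51 * log x * n := by nlinarith
    rw [div_le_iff₀ (by positivity)]
    calc n * x - S ≤ x * (n + 1) := by linarith
      _ ≤ 0.51 * log x * n * (n + 1) := by gcongr
      _ = 0.51 * log x * (n * (n + 1)) := by ring
  have hratio : x / (3 * log x) ≤ S / n := by
    rw [div_le_div_iff₀ (by positivity) (by linarith)]
    nlinarith
  have hlog : log x - (log 3 + log (log x)) ≤ log (S / n) := by
    rw [← log_mul (by norm_num) (by positivity), ← log_div (by linarith) (by positivity)]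
    exact log_le_log (by positivity) hratio
  have hloglog := log_le_div_sub_one_add_log (x := log x) (c := 2 ^ 3) (by linarith) (by norm_num)
  rw [log_pow] at hloglog
  push_cast at hloglog
  linarith [log_two_lt_d9, log_three_lt_d9]

end GapLarge

theorem log2_mul_log_two_le {S n : ℕ} (k : ℕ) (hn : 0 < n) (hnS : n ≤ S) :
    Nat.log2 (S ^ k / n ^ k) * log 2 ≤ k * log (S / n) := by
  have hq : S ^ k / n ^ k ≠ 0 :=
    Nat.div_ne_zero_iff.2 ⟨(by positivity), Nat.pow_le_pow_left hnS k⟩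
  have hpow : (2 : ℝ) ^ Nat.log2 (S ^ k / n ^ k) ≤ (S / n : ℝ) ^ k :=
    calc (2 : ℝ) ^ Nat.log2 (S ^ k / n ^ k) ≤ (S ^ k / n ^ k : ℕ) := by
          exact_mod_cast Nat.log2_self_le hq
      _ ≤ (S / n : ℝ) ^ k := by
          rw [div_pow]
          exact_mod_cast Nat.cast_div_le (m := S ^ k) (n := n ^ k)
  rw [← log_pow, ← log_pow]
  exact log_le_log (by positivity) hpow

/-- A sufficient condition, in natural number arithmetic, for the gap inequality
`(n x - S) / (n (n + 1)) ≤ 0.87 log (S / n)`: the logarithm is replaced by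
`0.6931 ⌊log₂ (S / n) ^ 8⌋ / 8`. -/
def gapCheck (x n S : ℕ) : Bool :=
  decide (n * x * 8000000 ≤ S * 8000000 + 87 * 6931 * Nat.log2 (S ^ 8 / n ^ 8) * (n * (n + 1)))

theorem gap_le_of_gapCheck {x n S : ℕ} (hn : 0 < n) (hnS : n ≤ S) (h : gapCheck x n S = true) :
    (n * x - S : ℝ) / (n * (n + 1)) ≤ 0.87 * log (S / n) := by
  have hlog := log2_mul_log_two_le 8 hn hnS
  set k := Nat.log2 (S ^ 8 / n ^ 8)
  have hcheck : (n : ℝ) * x * 8000000 ≤ S * 8000000 + 87 * 6931 * k * (n * (n + 1)) := by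
    exact_mod_cast of_decide_eq_true h
  have hlog2 : k * 0.6931 ≤ k * log 2 := by gcongr; linarith [log_two_gt_d9]
  calc (n * x - S : ℝ) / (n * (n + 1)) ≤ 0.87 * (k * 0.6931 / 8) := by
        rw [div_le_iff₀ (by positivity)]
        linarith
    _ ≤ 0.87 * log (S / n) := by
        push_cast at hlog
        linarith

theorem prime_iff_coprime_factorial {B j : ℕ} (hj : j < (B + 1) ^ 2) :
    j.Prime ↔ 2 ≤ j ∧ j.Coprime (min (j - 1) B)! := by
  refine ⟨fun hp ↦ ⟨hp.two_le, ?_⟩, fun ⟨h2, hcop⟩ ↦ ?_⟩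
  · rw [hp.coprime_iff_not_dvd, hp.dvd_factorial]
    have := hp.two_le
    lia
  · by_contra hp
    have hlt : j.minFac < j := (Nat.not_prime_iff_minFac_lt h2).1 hp
    have hsq : j.minFac ^ 2 ≤ j := Nat.minFac_sq_le_self (by lia) hp
    have hB : j.minFac ≤ B := Nat.lt_succ_iff.1 (lt_of_pow_lt_pow_left₀ 2 (by lia) (by lia))
    have hdvd : j.minFac ∣ (min (j - 1) B)! := Nat.dvd_factorial j.minFac_pos (le_min (by lia) hB)
    have hone : j.minFac = 1 := Nat.eq_one_of_dvd_coprimes hcop j.minFac_dvd hdvd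
    exact absurd (Nat.minFac_eq_one_iff.1 hone) (by lia)

set_option maxRecDepth 100000 in
theorem gapCheck_of_lt_ten_thousand {x : ℕ} (hx : 13 ≤ x) (hx' : x < 10000) :
    gapCheck x x.primeCounting' (primeSumBelow x) = true := by
  let isPrime (j : ℕ) : Bool := decide (2 ≤ j ∧ j.Coprime (min (j - 1) 99)!)
  let step (j : ℕ) (s : ℕ × ℕ) : ℕ × ℕ := (s.1 + 1, s.2 + j)
  let state (j : ℕ) : ℕ × ℕ := (j.primeCounting', primeSumBelow j)
  have hstate13 : state 13 = (5, 28) := by decide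
  have hscan : scan isPrime step (fun j s ↦ gapCheck j s.1 s.2) 9987 13 (5, 28) = true := by
    decide +kernel
  refine check_of_scan (t := state) (fun j _ hj ↦ ?_) (hstate13 ▸ hscan) hx (by lia)
  have hiff := prime_iff_coprime_factorial (B := 99) (j := j) (by lia)
  simp only [state, isPrime, step, ← hiff, primeCounting'_succ, primeSumBelow_succ]
  by_cases hp : j.Prime <;> simp [hp]

theorem primeCounting'_le_primeSumBelow (n : ℕ) : n.primeCounting' ≤ primeSumBelow n := by
  rw [primeSumBelow, ← Nat.primesBelow_card_eq_primeCounting', card_eq_sum_ones]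
  exact sum_le_sum fun p hp ↦ (Nat.prime_of_mem_primesBelow hp).one_le

theorem gap_le {x : ℕ} (hx : 13 ≤ x) :
    (x.primeCounting' * x - primeSumBelow x : ℝ) / (x.primeCounting' * (x.primeCounting' + 1)) ≤
      0.87 * log (primeSumBelow x / x.primeCounting') := by
  obtain hlt | hge := lt_or_ge x 10000
  · have hpos : 0 < x.primeCounting' :=
      (by decide : 0 < Nat.primeCounting' 13).trans_le (Nat.monotone_primeCounting' hx)
    exact gap_le_of_gapCheck hpos (primeCounting'_le_primeSumBelow x)
      (gapCheck_of_lt_ten_thousand hx hlt)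
  · have hxR : (10000 : ℝ) ≤ x := by exact_mod_cast hge
    have hcount := le_primeCounting'_add_one_mul_log hge
    have hsum := le_primeSumBelow_add_mul_log hge
    have hle : (x.primeCounting' : ℝ) ≤ x := by exact_mod_cast Nat.count_le Nat.Prime
    obtain hsmall | hlarge := le_or_gt ((x.primeCounting' + 1) * log x) (2 * x)
    · exact gap_le_of_mul_log_le hxR hcount hsum hsmall
    · exact gap_le_of_lt_mul_log hxR hle hsum hlarge

/-! ### Averaged primes and their counting function -/

theorem sum_Icc_nthPrime (i : ℕ) :
    ∑ j ∈ Icc 1 i, nthPrime j = primeSumBelow (Nat.nth Nat.Prime i) := by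
  induction i with
  | zero => simp [primeSumBelow]
  | succ i ih =>
    rw [sum_Icc_succ_top (by lia), ih, primeSumBelow, primeSumBelow, Nat.primesBelow,
      Nat.primesBelow, Nat.filter_range_nth_eq_insert_of_infinite Nat.infinite_setOfPred_prime,
      sum_insert (by simp), add_comm]
    rfl

theorem avgPrime_eq_div (i : ℕ) : avgPrime i = primeSumBelow (Nat.nth Nat.Prime i) / i := by
  rw [avgPrime, ← Nat.cast_sum, sum_Icc_nthPrime, one_div_mul_eq_div]

theorem avgPrime_eq_div_of_prime {q n S : ℕ} (hq : q.Prime) (hn : q.primeCounting' = n)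
    (hS : primeSumBelow q = S) : avgPrime n = S / n := by
  rw [avgPrime_eq_div, ← hn, Nat.primeCounting', Nat.nth_count hq, hS]

theorem avgPrime_five : avgPrime 5 = 28 / 5 := by
  exact_mod_cast avgPrime_eq_div_of_prime (q := 13) (by norm_num) (by decide) (by decide)

theorem avgGap_eq_div {i : ℕ} (hi : 1 ≤ i) :
    avgGap i = (i * Nat.nth Nat.Prime i - primeSumBelow (Nat.nth Nat.Prime i)) /
      (i * (i + 1)) := by
  have hsum : primeSumBelow (Nat.nth Nat.Prime (i + 1)) =
      primeSumBelow (Nat.nth Nat.Prime i) + Nat.nth Nat.Prime i := by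
    rw [← sum_Icc_nthPrime, ← sum_Icc_nthPrime, sum_Icc_succ_top (by lia)]
    rfl
  rw [avgGap, avgPrime_eq_div, avgPrime_eq_div, hsum]
  push_cast
  field

theorem avgPrime_monotoneOn : MonotoneOn avgPrime (Set.Ici 1) := by
  refine monotoneOn_nat_Ici_of_le_succ fun i hi ↦ sub_nonneg.1 ?_
  change 0 ≤ avgGap i
  rw [avgGap_eq_div hi]
  have hle := primeSumBelow_le (Nat.nth Nat.Prime i)
  rw [Nat.primeCounting'_nth_eq] at hle
  exact div_nonneg (sub_nonneg.2 (by exact_mod_cast hle)) (by positivity)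

theorem avgGap_le {i : ℕ} (hi : 5 ≤ i) : avgGap i ≤ 0.87 * log (avgPrime i) := by
  have hnth : 13 ≤ Nat.nth Nat.Prime i :=
    calc 13 = Nat.nth Nat.Prime 5 := (Nat.nth_count (p := Nat.Prime) (n := 13) (by norm_num)).symm
      _ ≤ Nat.nth Nat.Prime i := Nat.nth_monotone Nat.infinite_setOfPred_prime hi
  have hgap := gap_le hnth
  rw [Nat.primeCounting'_nth_eq] at hgap
  rwa [avgGap_eq_div (by lia), avgPrime_eq_div]

theorem div_two_le_avgPrime (i : ℕ) : i / 2 ≤ avgPrime i := by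
  obtain rfl | hi := i.eq_zero_or_pos
  · simp [avgPrime]
  have hsum (k : ℕ) : (k : ℝ) * k ≤ 2 * ∑ j ∈ Icc 1 k, (nthPrime j : ℝ) := by
    induction k with
    | zero => simp
    | succ k ih =>
      have hnth : ((k + 2 : ℕ) : ℝ) ≤ nthPrime (k + 1) := by
        exact_mod_cast Nat.add_two_le_nth_prime k
      rw [sum_Icc_succ_top (by lia)]
      push_cast at hnth ⊢
      linarith
  rw [avgPrime, one_div_mul_eq_div, div_le_div_iff₀ (by norm_num) (by positivity)]
  linarith [hsum i]

theorem avgPrime_le_finite (x : ℝ) : {i : ℕ | 1 ≤ i ∧ avgPrime i ≤ x}.Finite :=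
  (Set.finite_Iic ⌊2 * x⌋₊).subset fun i ⟨_, hi⟩ ↦
    Nat.le_floor (by linarith [div_two_le_avgPrime i])

theorem le_card_iff_of_monotoneOn {α : Type*} [LinearOrder α] {f : ℕ → α}
    (hf : MonotoneOn f (Set.Ici 1)) {x : α}
    (hfin : {i : ℕ | 1 ≤ i ∧ f i ≤ x}.Finite) {n : ℕ} (hn : 1 ≤ n) :
    n ≤ Nat.card {i : ℕ | 1 ≤ i ∧ f i ≤ x} ↔ f n ≤ x := by
  rw [Nat.card_coe_set_eq]
  refine ⟨fun hcard ↦ ?_, fun hfx ↦ ?_⟩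
  · by_contra! hlt
    have hsub : {i : ℕ | 1 ≤ i ∧ f i ≤ x} ⊆ (Ico 1 n : Finset ℕ) := fun i ⟨hi, hix⟩ ↦
      mem_coe.2 <| mem_Ico.2 ⟨hi, lt_of_not_ge fun hni ↦ (hlt.trans_le (hf hn hi hni)).not_ge hix⟩
    have hle := Set.ncard_le_ncard hsub
    rw [Set.ncard_coe_finset, Nat.card_Ico] at hle
    lia
  · have hsub : ((Icc 1 n : Finset ℕ) : Set ℕ) ⊆ {i : ℕ | 1 ≤ i ∧ f i ≤ x} := fun i hi ↦
      have hi := mem_Icc.1 (mem_coe.1 hi)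
      ⟨hi.1, (hf hi.1 hn hi.2).trans hfx⟩
    simpa using Set.ncard_le_ncard hsub hfin

theorem le_avgPrimeCount_iff {x : ℝ} {i : ℕ} (hi : 1 ≤ i) :
    i ≤ avgPrimeCount x ↔ avgPrime i ≤ x :=
  le_card_iff_of_monotoneOn avgPrime_monotoneOn (avgPrime_le_finite x) hi

/-! ### Averaged primes in an interval -/

theorem sub_le_mul_of_forall_succ_sub_le {R : Type*} [CommRing R] [LinearOrder R]
    [IsStrictOrderedRing R] {f : ℕ → R} {g : R} {a b : ℕ} (hab : a ≤ b)
    (hg : ∀ i, a ≤ i → i < b → f (i + 1) - f i ≤ g) : f b - f a ≤ (b - a) * g := by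
  induction b, hab using Nat.le_induction with
  | base => simp
  | succ b hab ih =>
    have hprev := ih fun i hai hib ↦ hg i hai (by lia)
    push_cast
    linarith [hg b hab b.lt_succ_self]

theorem sub_le_avgPrimeCount_sub {x y : ℝ} (hy : avgPrime 5 ≤ y) (hyx : y ≤ x) :
    x - y ≤ (avgPrimeCount x - avgPrimeCount y + 1) * (0.87 * log x) := by
  set a := avgPrimeCount y
  set b := avgPrimeCount x
  have ha5 : 5 ≤ a := (le_avgPrimeCount_iff (by norm_num)).2 hy
  have hay : avgPrime a ≤ y := (le_avgPrimeCount_iff (by lia)).1 le_rfl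
  have hab : a ≤ b := (le_avgPrimeCount_iff (by lia)).2 (hay.trans hyx)
  have hbx : x < avgPrime (b + 1) := by
    rw [← not_le, ← le_avgPrimeCount_iff (by lia)]
    exact b.lt_succ_self.not_ge
  have hgap (i : ℕ) (hai : a ≤ i) (hib : i < b + 1) : avgGap i ≤ 0.87 * log x := by
    have hpos : 0 < avgPrime i :=
      (by positivity [ha5.trans hai] : (0 : ℝ) < i / 2).trans_le (div_two_le_avgPrime i)
    have hix : avgPrime i ≤ x := (le_avgPrimeCount_iff (by lia)).1 (Nat.lt_succ_iff.1 hib)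
    calc avgGap i ≤ 0.87 * log (avgPrime i) := avgGap_le (ha5.trans hai)
      _ ≤ 0.87 * log x := by gcongr
  have htel := sub_le_mul_of_forall_succ_sub_le (f := avgPrime) (hab.trans b.le_succ) hgap
  push_cast at htel
  linarith

theorem le_avgPrimeCount_sub_of_ge {m : ℝ} (hm : 2.4 ≤ m) :
    (2 * m - 1) / (2 * log (m + 1)) ≤
      (avgPrimeCount ((m + 1) ^ 2) : ℝ) - avgPrimeCount (m ^ 2) := by
  have hL : 0 < log (m + 1) := log_pos (by linarith)
  have hinterval := sub_le_avgPrimeCount_sub (x := (m + 1) ^ 2) (y := m ^ 2)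
    (by rw [avgPrime_five]; nlinarith) (by gcongr; linarith)
  rw [log_pow] at hinterval
  push_cast at hinterval
  -- The tangent of `log` at `27 / 4`, where `log (27 / 4) = 3 * log 3 - 2 * log 2`.
  have htangent : log (m + 1) ≤ (m + 1) / (27 / 4) + 0.91 := by
    have h := log_le_div_sub_one_add_log (x := m + 1) (c := 3 ^ 3 / 2 ^ 2) (by linarith)
      (by norm_num)
    rw [log_div (by norm_num) (by norm_num), log_pow, log_pow] at h
    norm_num at h ⊢
    linarith [log_two_gt_d9, log_three_lt_d9]
  rw [div_le_iff₀ (by positivity)]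
  linarith

theorem div_two_mul_log_le_two {m : ℝ} (hm : 1 ≤ m) (hm' : m < 2.4) :
    (2 * m - 1) / (2 * log (m + 1)) ≤ 2 := by
  have hL : 0 < log (m + 1) := log_pos (by linarith)
  have hlog := one_sub_inv_le_log_of_pos (x := (m + 1) / 2) (by linarith)
  rw [log_div (by linarith) (by norm_num), inv_div] at hlog
  have hinv : 2 / (m + 1) ≤ (6.77 - (2 * m - 1)) / 4 := by
    rw [div_le_iff₀ (by linarith)]
    nlinarith
  rw [div_le_iff₀ (by positivity)]
  linarith [log_two_gt_d9]

theorem avgPrimeCount_add_two_le {x y : ℝ} {i : ℕ} (hi : 1 ≤ i) (hy : y < avgPrime i)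
    (hx : avgPrime (i + 1) ≤ x) : avgPrimeCount y + 2 ≤ avgPrimeCount x := by
  rw [← not_le, ← le_avgPrimeCount_iff hi] at hy
  rw [← le_avgPrimeCount_iff (by lia)] at hx
  lia

theorem avgPrimeCount_sq_add_two_le {m : ℝ} (hm : 1 ≤ m) (hm' : m < 2.4) :
    avgPrimeCount (m ^ 2) + 2 ≤ avgPrimeCount ((m + 1) ^ 2) := by
  have avgPrime_two : avgPrime 2 = 5 / 2 := by
    exact_mod_cast avgPrime_eq_div_of_prime (q := 5) (by norm_num) (by decide) (by decide)
  have avgPrime_three : avgPrime 3 = 10 / 3 := by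
    exact_mod_cast avgPrime_eq_div_of_prime (q := 7) (by norm_num) (by decide) (by decide)
  have avgPrime_four : avgPrime 4 = 17 / 4 := by
    exact_mod_cast avgPrime_eq_div_of_prime (q := 11) (by norm_num) (by decide) (by decide)
  have avgPrime_six : avgPrime 6 = 41 / 6 := by
    exact_mod_cast avgPrime_eq_div_of_prime (q := 17) (by norm_num) (by decide) (by decide)
  have avgPrime_seven : avgPrime 7 = 58 / 7 := by
    exact_mod_cast avgPrime_eq_div_of_prime (q := 19) (by norm_num) (by decide) (by decide)
  obtain h | h := lt_or_ge (m ^ 2) (avgPrime 2)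
  · refine avgPrimeCount_add_two_le (by norm_num) h ?_
    rw [avgPrime_three]
    nlinarith
  obtain h' | h' := lt_or_ge (m ^ 2) (avgPrime 4)
  · refine avgPrimeCount_add_two_le (by norm_num) h' ?_
    rw [avgPrime_two] at h
    have : 1.5 ≤ m := by nlinarith
    rw [avgPrime_five]
    nlinarith
  · have hlt : m ^ 2 < avgPrime 6 := by
      rw [avgPrime_six]
      nlinarith
    refine avgPrimeCount_add_two_le (by norm_num) hlt ?_
    rw [avgPrime_four] at h'
    have : 2 ≤ m := by nlinarith
    rw [avgPrime_seven]
    nlinarith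

theorem le_avgPrimeCount_sub_of_lt {m : ℝ} (hm : 1 ≤ m) (hm' : m < 2.4) :
    (2 * m - 1) / (2 * log (m + 1)) ≤
      (avgPrimeCount ((m + 1) ^ 2) : ℝ) - avgPrimeCount (m ^ 2) :=
  calc (2 * m - 1) / (2 * log (m + 1)) ≤ 2 := div_two_mul_log_le_two hm hm'
    _ ≤ (avgPrimeCount ((m + 1) ^ 2) : ℝ) - avgPrimeCount (m ^ 2) := by
      rw [le_sub_iff_add_le']
      exact_mod_cast avgPrimeCount_sq_add_two_le hm hm'

end AveragedPrimes

theorem stmt12 (m : ℝ) (hm : 1 ≤ m) :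
    (avgPrimeCount ((m + 1) ^ 2) : ℝ) - (avgPrimeCount (m ^ 2) : ℝ) ≥
      (2 * m - 1) / (2 * Real.log (m + 1)) := by
  obtain hsmall | hlarge := lt_or_ge m 2.4
  · exact AveragedPrimes.le_avgPrimeCount_sub_of_lt hm hsmall
  · exact AveragedPrimes.le_avgPrimeCount_sub_of_ge hlarge
end

section
/- For every integer m ≥ 2, the averaged-prime analogue of the Oppermann conjecture holds: π̄((m + 1/2)²) > π̄(m²) and π̄(m²) > π̄((m − 1/2)²). -/
open Finset Real

/-!
Passing from `p̄ₙ` to `p̄ₙ₊₁` moves the average by `(pₙ₊₁ - p̄ₙ) / (n + 1)`. Since `pₙ ≥ 2n - 1`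
gives `p̄ₙ ≥ n`, this step is at most `√p̄ₙ` as soon as `pₙ₊₁ ≤ n + (n + 1) ⌊√n⌋`. With `k = ⌊√n⌋`,
the latter follows from `π(k³ + k² + k) ≥ (k + 1)²`, which Chebyshev's lower bound for `π` gives for
`k ≥ 12` and a finite computation for `5 ≤ k < 12`; the cases `n < 25` are checked directly. Hence,
if `y ≥ 2` and `y ≥ x + √x`, the interval `(x, y]` contains an averaged prime. Apply this to
`x = (m - 1/2)²` and `x = m²`, where `x + √x` is `m² - 1/4` and `(m + 1/2)² - 1/4`.
-/

lemma two_mul_add_one_le_nth_prime (n : ℕ) : 2 * n + 1 ≤ Nat.nth Nat.Prime n := by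
  induction n with
  | zero => exact (Nat.prime_nth_prime 0).one_le
  | succ n ih =>
    have hlt : Nat.nth Nat.Prime n < Nat.nth Nat.Prime (n + 1) :=
      Nat.nth_strictMono Nat.infinite_setOfPred_prime n.lt_succ_self
    have htwo : 2 ≤ Nat.nth Nat.Prime n := (Nat.prime_nth_prime n).two_le
    have hodd := (Nat.prime_nth_prime (n + 1)).eq_two_or_odd
    lia

lemma nth_prime_le_of_lt_primeCounting {n N : ℕ} (h : n < Nat.primeCounting N) :
    Nat.nth Nat.Prime n ≤ N :=
  Nat.lt_succ_iff.mp (Nat.nth_lt_of_lt_count h)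

lemma prime_iff_coprime_factorial_sqrt {n : ℕ} :
    n.Prime ↔ 1 < n ∧ n.Coprime (Nat.factorial n.sqrt) := by
  constructor
  · exact fun hp => ⟨hp.one_lt, hp.coprime_factorial_of_lt (Nat.sqrt_lt_self hp.one_lt)⟩
  · rintro ⟨hn, hcop⟩
    by_contra hp
    have hlt : n.sqrt < n.minFac := (Nat.coprime_factorial_iff hn.ne').mp hcop
    exact hlt.not_ge (Nat.le_sqrt'.mpr (Nat.minFac_sq_le_self (by lia) hp))

-- Unlike the left-hand side, the right-hand side is fast to evaluate in the kernel, where `Nat.gcd`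
-- is a primitive.
lemma primeCounting_eq_count_coprime_factorial_sqrt (n : ℕ) :
    Nat.primeCounting n =
      Nat.count (fun k => 1 < k ∧ k.Coprime (Nat.factorial k.sqrt)) (n + 1) := by
  rw [Nat.primeCounting, Nat.primeCounting', Nat.count_eq_card_filter_range,
    Nat.count_eq_card_filter_range]
  exact congrArg card (filter_congr fun k _ => prime_iff_coprime_factorial_sqrt)

lemma le_mul_primeCounting_add_one_of_lt_two_pow {n r : ℕ} (h : n < 2 ^ r) :
    n ≤ r * (Nat.primeCounting n + 1) := by
  have log_le {a : ℕ} (ha : a ≤ 2 ^ r) : log a ≤ r * log 2 := by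
    rcases a.eq_zero_or_pos with rfl | hpos
    · simpa using by positivity
    · rw [← log_pow]
      exact log_le_log (mod_cast hpos) (mod_cast ha)
  have hscaled : n * log 2 ≤ (r * (Nat.primeCounting n + 1)) * log 2 := by
    calc n * log 2
        ≤ Chebyshev.psi n + log (n + 1) := by linarith [Chebyshev.psi_ge n]
      _ ≤ Nat.primeCounting n * log n + log (n + 1) := by
        gcongr
        exact Chebyshev.psi_le_primeCounting_mul_log n
      _ ≤ Nat.primeCounting n * (r * log 2) + r * log 2 := by
        gcongr
        · exact log_le h.le
        · exact_mod_cast log_le h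
      _ = (r * (Nat.primeCounting n + 1)) * log 2 := by ring
  exact_mod_cast le_of_mul_le_mul_right hscaled (log_pos one_lt_two)

lemma succ_cube_add_succ_sq_add_succ_lt_two_pow {k : ℕ} (hk : 11 ≤ k) :
    (k + 1) ^ 3 + (k + 1) ^ 2 + (k + 1) < 2 ^ k := by
  induction k, hk using Nat.le_induction with
  | base => norm_num
  | succ k hk ih =>
    rw [pow_succ 2]
    nlinarith [sq_nonneg k]

lemma succ_sq_le_primeCounting {k : ℕ} (hk : 5 ≤ k) :
    (k + 1) ^ 2 ≤ Nat.primeCounting (k ^ 3 + k ^ 2 + k) := by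
  rcases lt_or_ge k 12 with hsmall | hlarge
  · have hcheck : ∀ k ∈ Ico 5 12, (k + 1) ^ 2 ≤ Nat.primeCounting (k ^ 3 + k ^ 2 + k) := by
      simp only [primeCounting_eq_count_coprime_factorial_sqrt]
      decide +kernel
    exact hcheck k (mem_Ico.mpr ⟨hk, hsmall⟩)
  · obtain ⟨r, rfl⟩ := Nat.exists_eq_add_of_le' (show 1 ≤ k by lia)
    have hpi := le_mul_primeCounting_add_one_of_lt_two_pow
      (succ_cube_add_succ_sq_add_succ_lt_two_pow (show 11 ≤ r by lia))
    by_contra! hlt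
    nlinarith [Nat.mul_le_mul_left r (Nat.succ_le_of_lt hlt)]

lemma lt_primeCounting_add_mul_sqrt {n : ℕ} (hn : 1 ≤ n) :
    n < Nat.primeCounting (n + (n + 1) * n.sqrt) := by
  rcases lt_or_ge n 25 with hsmall | hlarge
  · have hcheck : ∀ n ∈ Ico 1 25, n < Nat.primeCounting (n + (n + 1) * n.sqrt) := by
      simp only [primeCounting_eq_count_coprime_factorial_sqrt]
      decide +kernel
    exact hcheck n (mem_Ico.mpr ⟨hn, hsmall⟩)
  · have hk : 5 ≤ n.sqrt := Nat.le_sqrt.mpr hlarge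
    have hle : n.sqrt ^ 2 ≤ n := Nat.sqrt_le' n
    calc n < (n.sqrt + 1) ^ 2 := Nat.lt_succ_sqrt' n
      _ ≤ Nat.primeCounting (n.sqrt ^ 3 + n.sqrt ^ 2 + n.sqrt) := succ_sq_le_primeCounting hk
      _ ≤ Nat.primeCounting (n + (n + 1) * n.sqrt) := by
        apply Nat.monotone_primeCounting
        calc n.sqrt ^ 3 + n.sqrt ^ 2 + n.sqrt = n.sqrt ^ 2 + (n.sqrt ^ 2 + 1) * n.sqrt := by ring
          _ ≤ n + (n + 1) * n.sqrt := by gcongr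

lemma nthPrime_succ_le_add_mul_sqrt {n : ℕ} (hn : 1 ≤ n) :
    (nthPrime (n + 1) : ℝ) ≤ n + (n + 1) * √n := by
  calc (nthPrime (n + 1) : ℝ) ≤ n + (n + 1) * n.sqrt := by
        exact_mod_cast nth_prime_le_of_lt_primeCounting (lt_primeCounting_add_mul_sqrt hn)
    _ ≤ n + (n + 1) * √n := by
        gcongr
        exact nat_sqrt_le_real_sqrt

lemma mul_avgPrime (n : ℕ) : n * avgPrime n = ∑ i ∈ Icc 1 n, (nthPrime i : ℝ) := by
  rcases eq_or_ne n 0 with rfl | hn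
  · simp
  · rw [avgPrime]
    field_simp

lemma succ_mul_avgPrime_succ (n : ℕ) :
    (n + 1) * avgPrime (n + 1) = n * avgPrime n + nthPrime (n + 1) := by
  rw [mul_avgPrime, ← sum_Icc_succ_top (by lia), ← mul_avgPrime]
  push_cast
  rfl

lemma le_avgPrime (n : ℕ) : n ≤ avgPrime n := by
  induction n with
  | zero => simp [avgPrime]
  | succ n ih =>
    have hprime : (2 * n + 1 : ℝ) ≤ nthPrime (n + 1) :=
      mod_cast two_mul_add_one_le_nth_prime n
    refine le_of_mul_le_mul_left ?_ (show (0 : ℝ) < n + 1 by positivity)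
    push_cast
    calc ((n : ℝ) + 1) * (n + 1) = n * n + (2 * n + 1) := by ring
      _ ≤ n * avgPrime n + nthPrime (n + 1) := by gcongr
      _ = (n + 1) * avgPrime (n + 1) := (succ_mul_avgPrime_succ n).symm

lemma avgPrime_succ_le_add_sqrt {n : ℕ} (hn : 1 ≤ n) :
    avgPrime (n + 1) ≤ avgPrime n + √(avgPrime n) := by
  refine le_of_mul_le_mul_left ?_ (show (0 : ℝ) < n + 1 by positivity)
  calc (n + 1) * avgPrime (n + 1) = n * avgPrime n + nthPrime (n + 1) := succ_mul_avgPrime_succ n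
    _ ≤ n * avgPrime n + (n + (n + 1) * √n) := by
      gcongr
      exact nthPrime_succ_le_add_mul_sqrt hn
    _ ≤ n * avgPrime n + (avgPrime n + (n + 1) * √(avgPrime n)) := by
      gcongr <;> exact le_avgPrime n
    _ = (n + 1) * (avgPrime n + √(avgPrime n)) := by ring

lemma exists_avgPrime_mem_Ioc {x y : ℝ} (hy : 2 ≤ y) (hxy : x + √x ≤ y) :
    ∃ n, 1 ≤ n ∧ avgPrime n ∈ Set.Ioc x y := by
  classical
  have hex : ∃ n, x < avgPrime (n + 1) := by
    obtain ⟨n, hn⟩ := exists_nat_gt x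
    exact ⟨n, hn.trans_le <| (by simp : (n : ℝ) ≤ (n + 1 : ℕ)).trans (le_avgPrime (n + 1))⟩
  refine ⟨Nat.find hex + 1, by lia, Nat.find_spec hex, ?_⟩
  rcases hfind : Nat.find hex with _ | n
  · rwa [zero_add, avgPrime_one]
  · have hle : avgPrime (n + 1) ≤ x := not_lt.mp (Nat.find_min hex (by lia))
    calc avgPrime (n + 1 + 1) ≤ avgPrime (n + 1) + √(avgPrime (n + 1)) :=
          avgPrime_succ_le_add_sqrt (by lia)
      _ ≤ x + √x := by gcongr
      _ ≤ y := hxy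

lemma avgPrimeCount_lt_of_add_sqrt_le {x y : ℝ} (hy : 2 ≤ y) (hxy : x + √x ≤ y) :
    avgPrimeCount x < avgPrimeCount y := by
  obtain ⟨n, hn, hxn, hny⟩ := exists_avgPrime_mem_Ioc hy hxy
  have hle : x ≤ y := by linarith [sqrt_nonneg x]
  refine Set.ncard_lt_ncard (Set.ssubset_iff_exists.mpr ⟨?_, n, ⟨hn, hny⟩, ?_⟩)
    (finite_setOf_avgPrime_le y)
  · exact fun i hi => ⟨hi.1, hi.2.trans hle⟩
  · exact fun hmem => hxn.not_ge hmem.2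

theorem stmt13_general (m : ℝ) (hm : √2 ≤ m) :
    avgPrimeCount ((m + 1 / 2) ^ 2) > avgPrimeCount (m ^ 2) ∧
    avgPrimeCount (m ^ 2) > avgPrimeCount ((m - 1 / 2) ^ 2) := by
  have hone : 1 ≤ m := (one_le_sqrt.mpr one_le_two).trans hm
  have htwo : 2 ≤ m ^ 2 := (sqrt_le_left (by linarith)).mp hm
  constructor
  · apply avgPrimeCount_lt_of_add_sqrt_le (by nlinarith)
    rw [sqrt_sq (by linarith)]
    linarith
  · apply avgPrimeCount_lt_of_add_sqrt_le htwo
    rw [sqrt_sq (by linarith)]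
    linarith

theorem stmt13 (m : ℕ) (hm : 2 ≤ m) :
    avgPrimeCount (((m : ℝ) + 1 / 2) ^ 2) > avgPrimeCount ((m : ℝ) ^ 2) ∧
    avgPrimeCount ((m : ℝ) ^ 2) > avgPrimeCount (((m : ℝ) - 1 / 2) ^ 2) := by
  have hm' : √2 ≤ m := (sqrt_le_iff.mpr (by norm_num)).trans (Nat.ofNat_le_cast.mpr hm)
  exact stmt13_general m hm'
end
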